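/- arXiv:2108.09799 — 10 statements merged into one kernel-verified Lean document; each statement's English description precedes it below -/
import Mathlib

section
/- Let x0 < x1 be real, let ζ : ℝ → ℝ be measurable with ζmin ≤ ζ(x) ≤ ζmax for almost every x ∈ (x0, x1), where 0 < ζmin ≤ ζmax < ∞, and let ζ₀, ζ₁ be real numbers with ζ₀ ≥ ζmin and ζ₁ ≥ ζmin. Let ν > 0 and η ∈ ℝ, and let ω = a + i·b ∈ ℂ with a ∈ ℝ and b ≥ 0. Suppose u, v : ℝ → ℂ are such that v is integrable on (x0, x1), u(x) = u(x0) + ∫_{x0}^{x} v(s) ds for all x ∈ [x0, x1], and u, v are square-integrable on (x0, x1). Define a(u,u) = −∫_{x0}^{x1} ζ·|u|² − ∫_{x0}^{x1} ζ·|v|² + i·ω·( ζ₀·|u(x0)|² + ζ₁·(ν + i·η)·|u(x1)|² ). Then |a(u,u)| ≥ c · ( ∫_{x0}^{x1} |u|² + ∫_{x0}^{x1} |v|² ), where c = (ζmin/2)·min{1, ν/|η|} if η ≠ 0, and c = ζmin/2 if η = 0. -/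
open MeasureTheory

/-- Proposition (prop-bounded-coercive): coercivity of the sesquilinear form
`a_1^ω(u,u) = −⟨ζu,u⟩ − ⟨ζu′,u′⟩ + iω(ζ₀|u(x0)|² + ζ₁(ν+iη)|u(x1)|²)`
on `W^{1,2}((x0,x1))`, for `ω = a + ib` in the closed upper half plane. -/
theorem coercivity_a1
    (x0 x1 : ℝ) (hx : x0 < x1)
    (ζ : ℝ → ℝ) (hmeas : Measurable ζ)
    (ζmin ζmax : ℝ) (hζmin : 0 < ζmin) (hζminmax : ζmin ≤ ζmax)
    (hbound : ∀ᵐ x ∂(volume.restrict (Set.Ioo x0 x1)), ζmin ≤ ζ x ∧ ζ x ≤ ζmax)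
    (ζ0 ζ1 : ℝ) (hζ0 : ζmin ≤ ζ0) (hζ1 : ζmin ≤ ζ1)
    (ν η : ℝ) (hν : 0 < ν)
    (a b : ℝ) (hb : 0 ≤ b)
    (ω : ℂ) (hω : ω = (a : ℂ) + (b : ℂ) * Complex.I)
    (u v : ℝ → ℂ)
    (hv : IntegrableOn v (Set.Ioo x0 x1))
    (huv : ∀ x ∈ Set.Icc x0 x1, u x = u x0 + ∫ s in x0..x, v s)
    (hu2 : IntegrableOn (fun x => ‖u x‖ ^ 2) (Set.Ioo x0 x1))
    (hv2 : IntegrableOn (fun x => ‖v x‖ ^ 2) (Set.Ioo x0 x1))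
    (A : ℂ)
    (hA : A = -(((∫ x in Set.Ioo x0 x1, ζ x * ‖u x‖ ^ 2) : ℝ) : ℂ)
              - (((∫ x in Set.Ioo x0 x1, ζ x * ‖v x‖ ^ 2) : ℝ) : ℂ)
              + Complex.I * ω *
                ((((ζ0 * ‖u x0‖ ^ 2) : ℝ) : ℂ)
                  + (ζ1 : ℂ) * ((ν : ℂ) + Complex.I * (η : ℂ)) * ((‖u x1‖ ^ 2 : ℝ) : ℂ)))
    (c : ℝ)
    (hc : c = if η = 0 then ζmin / 2 else (ζmin / 2) * min 1 (ν / |η|)) :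
    c * ((∫ x in Set.Ioo x0 x1, ‖u x‖ ^ 2) + ∫ x in Set.Ioo x0 x1, ‖v x‖ ^ 2) ≤ ‖A‖ := by
  have key : ∀ w : ℝ → ℂ, IntegrableOn (fun x => ‖w x‖ ^ 2) (Set.Ioo x0 x1) →
      ζmin * (∫ x in Set.Ioo x0 x1, ‖w x‖ ^ 2) ≤ ∫ x in Set.Ioo x0 x1, ζ x * ‖w x‖ ^ 2 := by
    intro w hw
    rw [← integral_const_mul]
    apply integral_mono_ae (hw.const_mul ζmin)
    · refine Integrable.bdd_mul (c := ζmax) hw hmeas.aestronglyMeasurable ?_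
      filter_upwards [hbound] with x hx
      rw [Real.norm_eq_abs, abs_le]
      constructor <;> linarith [hx.1, hx.2]
    · filter_upwards [hbound] with x hx
      exact mul_le_mul_of_nonneg_right hx.1 (by positivity)
  have hU := key u hu2
  have hV := key v hv2
  have hU0 : 0 ≤ ∫ x in Set.Ioo x0 x1, ‖u x‖ ^ 2 := integral_nonneg fun x => by positivity
  have hV0 : 0 ≤ ∫ x in Set.Ioo x0 x1, ‖v x‖ ^ 2 := integral_nonneg fun x => by positivity
  generalize (∫ x in Set.Ioo x0 x1, ζ x * ‖u x‖ ^ 2) = SU at *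
  generalize (∫ x in Set.Ioo x0 x1, ζ x * ‖v x‖ ^ 2) = SV at *
  generalize (∫ x in Set.Ioo x0 x1, ‖u x‖ ^ 2) = U at *
  generalize (∫ x in Set.Ioo x0 x1, ‖v x‖ ^ 2) = V at *
  obtain ⟨P, hP⟩ : ∃ P, P = ζ0 * ‖u x0‖ ^ 2 := ⟨_, rfl⟩
  obtain ⟨Q, hQ⟩ : ∃ Q, Q = ζ1 * ‖u x1‖ ^ 2 := ⟨_, rfl⟩
  have hP0 : 0 ≤ P := by rw [hP]; exact mul_nonneg (by linarith) (by positivity)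
  have hQ0 : 0 ≤ Q := by rw [hQ]; exact mul_nonneg (by linarith) (by positivity)
  have hA' : A = ((-SU - SV - b * (P + ν * Q) - a * η * Q : ℝ) : ℂ)
      + ((a * (P + ν * Q) - b * η * Q : ℝ) : ℂ) * Complex.I := by
    rw [hA, hω, hP, hQ]
    push_cast
    linear_combination ((b : ℂ) * (ζ0 * ‖u x0‖ ^ 2 + ζ1 * ν * ‖u x1‖ ^ 2)
      + a * η * ζ1 * ‖u x1‖ ^ 2 + b * Complex.I * ζ1 * η * ‖u x1‖ ^ 2) * Complex.I_sq
  have hre : A.re = -SU - SV - b * (P + ν * Q) - a * η * Q := by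
    rw [hA', Complex.add_re, Complex.ofReal_re, Complex.re_ofReal_mul, Complex.I_re]; ring
  have him : A.im = a * (P + ν * Q) - b * η * Q := by
    rw [hA', Complex.add_im, Complex.ofReal_im, Complex.im_ofReal_mul, Complex.I_im]; ring
  have h1 := (abs_le.1 (Complex.abs_re_le_norm A)).1
  have h2 := abs_le.1 (Complex.abs_im_le_norm A)
  have hn := norm_nonneg A
  obtain ⟨m, hm0, hm1, hmη, hcm⟩ : ∃ m : ℝ, 0 ≤ m ∧ m ≤ 1 ∧ m * |η| ≤ ν ∧ c = ζmin / 2 * m := by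
    by_cases h : η = 0
    · exact ⟨1, by norm_num, le_rfl, by simp [h, hν.le], by simp [hc, h]⟩
    · have hη : 0 < |η| := abs_pos.2 h
      refine ⟨min 1 (ν / |η|), by positivity, min_le_left _ _, ?_, by simp [hc, h]⟩
      calc min 1 (ν / |η|) * |η| ≤ ν / |η| * |η| :=
            mul_le_mul_of_nonneg_right (min_le_right _ _) hη.le
        _ = ν := div_mul_cancel₀ _ hη.ne'
  have hT : 0 ≤ b * (P + ν * Q) := by positivity
  have hS : ζmin * (U + V) ≤ SU + SV := by linarith
  have hmS : m * (ζmin * (U + V)) ≤ m * (SU + SV) := mul_le_mul_of_nonneg_left hS hm0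
  suffices hfin : m * (SU + SV) ≤ 2 * ‖A‖ by
    rw [hcm]; linarith
  have hmn : m * ‖A‖ ≤ ‖A‖ := mul_le_of_le_one_left hn hm1
  have hmre : m * (SU + SV + b * (P + ν * Q) + a * η * Q) ≤ m * ‖A‖ :=
    mul_le_mul_of_nonneg_left (by linarith) hm0
  have hmT : 0 ≤ m * (b * (P + ν * Q)) := mul_nonneg hm0 hT
  -- the remaining bound on the cross term
  have hcross : -(m * (a * η * Q)) ≤ ‖A‖ := by
    rcases le_total 0 η with hη | hη <;> rcases le_total 0 a with ha | ha
    · have : 0 ≤ m * (a * η * Q) := by positivity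
      linarith
    · rw [abs_of_nonneg hη] at hmη
      have e1 := mul_le_mul_of_nonneg_right hmη (mul_nonneg (neg_nonneg.2 ha) hQ0)
      have e2 : 0 ≤ -a * P := mul_nonneg (neg_nonneg.2 ha) hP0
      have e3 : 0 ≤ b * η * Q := by positivity
      linarith [h2.1]
    · rw [abs_of_nonpos hη] at hmη
      have e1 := mul_le_mul_of_nonneg_right hmη (mul_nonneg ha hQ0)
      have e2 : 0 ≤ a * P := mul_nonneg ha hP0
      have e3 : 0 ≤ b * -η * Q := mul_nonneg (mul_nonneg hb (neg_nonneg.2 hη)) hQ0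
      linarith [h2.2]
    · have : 0 ≤ m * (a * η * Q) :=
        mul_nonneg hm0 (mul_nonneg (mul_nonneg_of_nonpos_of_nonpos ha hη) hQ0)
      linarith
  linarith
end

section
/- Let n ≥ 1 and r_1, …, r_n ∈ (−1, 1), and let Φ_j, Φ_j^*, Ψ_j, Ψ_j^* be the associated orthogonal polynomials on the unit circle. For z ∈ ℂ with |z| = 1 and 1 ≤ j ≤ n let φ_j(w) = z·(w + r_j)/(1 + r_j·w). Then Ψ_n^*(z) + Φ_n^*(z) ≠ 0 and (φ_1 ∘ φ_2 ∘ ⋯ ∘ φ_n)(0) = ( Ψ_n^*(z) − Φ_n^*(z) ) / ( Ψ_n^*(z) + Φ_n^*(z) ). -/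
/-- The monic orthogonal polynomials on the unit circle with Verblunsky coefficients
`r 1, …, r n`, together with their duals: `(opucPhi r j).1 = Φ_j`, `(opucPhi r j).2 = Φ_j^*`. -/
noncomputable def opucPhi (r : ℕ → ℝ) : ℕ → (ℂ → ℂ) × (ℂ → ℂ)
  | 0 => (fun _ => 1, fun _ => 1)
  | j + 1 =>
      (fun z => z * (opucPhi r j).1 z - (r (j + 1) : ℂ) * (opucPhi r j).2 z,
       fun z => (opucPhi r j).2 z - (r (j + 1) : ℂ) * z * (opucPhi r j).1 z)

/-- The associated monic orthogonal polynomials with Verblunsky coefficients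
`-r 1, …, -r n`, together with their duals: `(opucPsi r j).1 = Ψ_j`, `(opucPsi r j).2 = Ψ_j^*`. -/
noncomputable def opucPsi (r : ℕ → ℝ) : ℕ → (ℂ → ℂ) × (ℂ → ℂ)
  | 0 => (fun _ => 1, fun _ => 1)
  | j + 1 =>
      (fun z => z * (opucPsi r j).1 z + (r (j + 1) : ℂ) * (opucPsi r j).2 z,
       fun z => (opucPsi r j).2 z + (r (j + 1) : ℂ) * z * (opucPsi r j).1 z)

theorem opuc_aux_gap (r : ℕ → ℝ) (z : ℂ) (hz : ‖z‖ = 1) (n : ℕ)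
    (hr : ∀ j, 1 ≤ j → j ≤ n → r j ∈ Set.Ioo (-1 : ℝ) 1) :
    Complex.normSq ((opucPsi r n).1 z - (opucPhi r n).1 z)
      < Complex.normSq ((opucPsi r n).2 z + (opucPhi r n).2 z) := by
  induction n with
  | zero =>
    simp only [opucPsi, opucPhi]
    norm_num [Complex.normSq_apply]
  | succ n ih =>
    have ih := ih (fun j h1 h2 => hr j h1 (by omega))
    obtain ⟨h1, h2⟩ := hr (n + 1) (by omega) le_rfl
    have hz2 : Complex.normSq z = 1 := by rw [Complex.normSq_eq_norm_sq, hz]; norm_num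
    have key : ∀ (t : ℝ) (s d : ℂ), -1 < t → t < 1 → Complex.normSq d < Complex.normSq s →
        Complex.normSq (d + t * s) < Complex.normSq (s + t * d) := by
      intro t s d h1 h2 h
      simp only [Complex.normSq_apply, Complex.add_re, Complex.add_im, Complex.mul_re,
        Complex.mul_im, Complex.ofReal_re, Complex.ofReal_im] at *
      nlinarith [mul_pos (mul_pos (sub_pos.2 h2) (neg_lt_iff_pos_add.1 h1)) (sub_pos.2 h)]
    have := key (r (n + 1)) ((opucPsi r n).2 z + (opucPhi r n).2 z) (z * ((opucPsi r n).1 z - (opucPhi r n).1 z)) h1 h2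
      (by rw [Complex.normSq_mul, hz2, one_mul]; exact ih)
    simp only [opucPsi, opucPhi]
    convert this using 2 <;> ring

theorem opuc_aux_fold (r : ℕ → ℝ) (z : ℂ) (hz : ‖z‖ = 1) (n : ℕ)
    (hr : ∀ j, 1 ≤ j → j ≤ n → r j ∈ Set.Ioo (-1 : ℝ) 1) (w : ℂ) (hw : ‖w‖ ≤ 1) :
    (List.ofFn fun j : Fin n => (j : ℕ) + 1).foldr
          (fun k w => z * (w + (r k : ℂ)) / (1 + (r k : ℂ) * w)) w
        = (((opucPsi r n).2 z - (opucPhi r n).2 z)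
            + w * ((opucPsi r n).1 z + (opucPhi r n).1 z))
          / (((opucPsi r n).2 z + (opucPhi r n).2 z)
            + w * ((opucPsi r n).1 z - (opucPhi r n).1 z)) := by
  induction n generalizing w with
  | zero =>
    simp only [opucPsi, opucPhi]
    norm_num
  | succ n ih =>
    obtain ⟨h1, h2⟩ := hr (n + 1) (by omega) le_rfl
    have hne : 1 + (r (n + 1) : ℂ) * w ≠ 0 := by
      intro h
      have e : (r (n + 1) : ℂ) * w = -1 := by linear_combination h
      have e2 := congrArg norm e
      rw [norm_mul, Complex.norm_real, norm_neg, norm_one, Real.norm_eq_abs] at e2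
      have := abs_lt.2 ⟨h1, h2⟩
      nlinarith [norm_nonneg w, abs_nonneg (r (n + 1))]
    have hle : ‖z * (w + (r (n + 1) : ℂ)) / (1 + (r (n + 1) : ℂ) * w)‖ ≤ 1 := by
      rw [norm_div, norm_mul, hz, one_mul, div_le_one (norm_pos_iff.2 hne)]
      refine (sq_le_sq₀ (norm_nonneg _) (norm_nonneg _)).1 ?_
      have hw2 : Complex.normSq w ≤ 1 := by
        rw [Complex.normSq_eq_norm_sq]; nlinarith [norm_nonneg w]
      rw [← Complex.normSq_eq_norm_sq, ← Complex.normSq_eq_norm_sq]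
      simp only [Complex.normSq_apply, Complex.add_re, Complex.add_im, Complex.mul_re,
        Complex.mul_im, Complex.ofReal_re, Complex.ofReal_im, Complex.one_re, Complex.one_im] at *
      nlinarith [mul_nonneg (mul_pos (sub_pos.2 h2) (neg_lt_iff_pos_add.1 h1)).le
        (sub_nonneg.2 hw2)]
    have ih := ih (fun j h1 h2 => hr j h1 (by omega)) _ hle
    rw [List.ofFn_succ', List.concat_eq_append, List.foldr_append]
    simp only [Fin.val_castSucc, Fin.val_last, List.foldr_cons, List.foldr_nil]
    rw [ih, ← mul_div_mul_right _ _ hne]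
    simp only [opucPsi, opucPhi]
    clear ih hle
    generalize (r (n + 1) : ℂ) = t at hne ⊢
    have e : z * (w + t) / (1 + t * w) * (1 + t * w) = z * (w + t) := div_mul_cancel₀ _ hne
    generalize z * (w + t) / (1 + t * w) = q at e ⊢
    congr 1
    · linear_combination ((opucPsi r n).1 z + (opucPhi r n).1 z) * e
    · linear_combination ((opucPsi r n).1 z - (opucPhi r n).1 z) * e

/-- OPUC representation of the reflection coefficient of an equally-spaced step
medium (Proposition prop-opuc(iv) + prop-step-composition):
`(φ_1 ∘ ⋯ ∘ φ_n)(0) = (Ψ_n^*(z) − Φ_n^*(z)) / (Ψ_n^*(z) + Φ_n^*(z))` for `|z| = 1`,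
where `φ_j(w) = z(w + r_j)/(1 + r_j w)`. -/
theorem opuc_reflection_representation
    (n : ℕ) (hn : 1 ≤ n) (r : ℕ → ℝ)
    (hr : ∀ j, 1 ≤ j → j ≤ n → r j ∈ Set.Ioo (-1 : ℝ) 1)
    (z : ℂ) (hz : ‖z‖ = 1) :
    (opucPsi r n).2 z + (opucPhi r n).2 z ≠ 0 ∧
      (List.ofFn fun j : Fin n => (j : ℕ) + 1).foldr
          (fun k w => z * (w + (r k : ℂ)) / (1 + (r k : ℂ) * w)) 0
        = ((opucPsi r n).2 z - (opucPhi r n).2 z) / ((opucPsi r n).2 z + (opucPhi r n).2 z) := by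
  have gap := opuc_aux_gap r z hz n hr
  refine ⟨fun h => ?_, ?_⟩
  · rw [h, Complex.normSq_zero] at gap
    exact absurd gap (not_lt.2 (Complex.normSq_nonneg _))
  · have := opuc_aux_fold r z hz n hr 0 (by simp)
    simpa only [zero_mul, add_zero] using this
end

section
/- Let n ≥ 0 and r_1, …, r_n ∈ (−1, 1), and let Φ_j, Φ_j^*, Ψ_j, Ψ_j^* be the associated orthogonal polynomials on the unit circle. Then for every 0 ≤ j ≤ n and every z ∈ ℂ with |z| ≤ 1: Ψ_j^*(z) + Φ_j^*(z) ≠ 0 and | Ψ_j(z) − Φ_j(z) | < | Ψ_j^*(z) + Φ_j^*(z) |. -/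
theorem opuc_step_aux (r : ℝ) (hr : r ∈ Set.Ioo (-1 : ℝ) 1) (w s : ℂ) (h : ‖w‖ < ‖s‖) :
    ‖w + (r : ℂ) * s‖ < ‖s + (r : ℂ) * w‖ := by
  have h2 : ‖w‖ ^ 2 < ‖s‖ ^ 2 := by gcongr
  refine lt_of_pow_lt_pow_left₀ 2 (norm_nonneg _) ?_
  rw [Complex.sq_norm, Complex.sq_norm, Complex.normSq_apply, Complex.normSq_apply] at h2 ⊢
  simp only [Complex.add_re, Complex.add_im, Complex.mul_re, Complex.mul_im, Complex.ofReal_re,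
    Complex.ofReal_im, zero_mul, sub_zero, add_zero]
  have h3 : 0 < 1 - r ^ 2 := by nlinarith [hr.1, hr.2]
  nlinarith [mul_pos h3 (sub_pos.2 h2)]

/-- The subsidiary claim (transmission-outer) of Proposition prop-opuc(v):
for `0 ≤ j ≤ n` and `|z| ≤ 1`, `Ψ_j^*(z) + Φ_j^*(z) ≠ 0` and
`|Ψ_j(z) − Φ_j(z)| < |Ψ_j^*(z) + Φ_j^*(z)|`. -/
theorem opuc_transmission_outer
    (n : ℕ) (r : ℕ → ℝ)
    (hr : ∀ j, 1 ≤ j → j ≤ n → r j ∈ Set.Ioo (-1 : ℝ) 1) :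
    ∀ j ≤ n, ∀ z : ℂ, ‖z‖ ≤ 1 →
      (opucPsi r j).2 z + (opucPhi r j).2 z ≠ 0 ∧
        ‖(opucPsi r j).1 z - (opucPhi r j).1 z‖ < ‖(opucPsi r j).2 z + (opucPhi r j).2 z‖ := by
  intro j hj z hz
  suffices h : ‖(opucPsi r j).1 z - (opucPhi r j).1 z‖ <
      ‖(opucPsi r j).2 z + (opucPhi r j).2 z‖ from
    ⟨norm_pos_iff.1 (lt_of_le_of_lt (norm_nonneg _) h), h⟩
  induction j with
  | zero => norm_num [opucPsi, opucPhi]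
  | succ k ih =>
    have h := ih (by omega)
    have hw : ‖z * ((opucPsi r k).1 z - (opucPhi r k).1 z)‖ <
        ‖(opucPsi r k).2 z + (opucPhi r k).2 z‖ := by
      rw [norm_mul]
      exact lt_of_le_of_lt (mul_le_of_le_one_left (norm_nonneg _) hz) h
    have := opuc_step_aux (r (k + 1)) (hr (k + 1) (by omega) hj) _ _ hw
    simp only [opucPsi, opucPhi]
    convert this using 2 <;> ring
end

section
/- Fix real numbers x0 < x1 and y ∈ (x0, x1], and let α : ℝ → ℝ be Lebesgue integrable on (x0, x1). Then E_α^{(x0,y)}(0) = exp( ∫_{x0}^{y} α ). -/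
open MeasureTheory

/-- The iterates `A_ω^j 𝟙` of the conjugate-linear Volterra operator
`A_ω f(t) = ∫_{x0}^t α(s) e^{2i(s−x0)ω} conj(f(s)) ds`. -/
noncomputable def Aiter (x0 : ℝ) (α : ℝ → ℝ) (ω : ℂ) : ℕ → ℝ → ℂ
  | 0 => fun _ => 1
  | j + 1 => fun t =>
      ∫ s in x0..t,
        (α s : ℂ) * Complex.exp (2 * Complex.I * ((s : ℂ) - (x0 : ℂ)) * ω)
          * (starRingEnd ℂ) (Aiter x0 α ω j s)

/-- The harmonic exponential `E_α^{(x0,y)}(ω) = Σ_{j≥0} A_ω^j 𝟙(y)`. -/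
noncomputable def harmE (x0 y : ℝ) (α : ℝ → ℝ) (ω : ℂ) : ℂ :=
  ∑' j : ℕ, Aiter x0 α ω j y

/-- `∫_{a}^{t} α F^n = F(t)^{n+1}/(n+1)` for `F = ∫_a α`. -/
lemma integral_mul_primitive_pow (a t : ℝ) (α : ℝ → ℝ)
    (hα : IntervalIntegrable α volume a t) (n : ℕ) :
    ∫ s in a..t, α s * (∫ r in a..s, α r) ^ n = (∫ r in a..t, α r) ^ (n + 1) / (n + 1) := by
  have hac : AbsolutelyContinuousOnInterval (fun s => ∫ r in a..s, α r) a t :=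
    hα.absolutelyContinuousOnInterval_intervalIntegral (c := a) (by simp)
  have hpow : ∀ m : ℕ,
      AbsolutelyContinuousOnInterval (fun s => (∫ r in a..s, α r) ^ (m + 1)) a t := by
    intro m
    induction m with
    | zero => simpa using hac
    | succ m ih =>
      have := ih.fun_mul hac
      simpa only [pow_succ] using this
  have key := (hpow n).integral_deriv_eq_sub
  have hcongr : ∫ s in a..t, deriv (fun s => (∫ r in a..s, α r) ^ (n + 1)) s
      = ∫ s in a..t, ((n : ℝ) + 1) * (α s * (∫ r in a..s, α r) ^ n) := by
    apply intervalIntegral.integral_congr_ae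
    filter_upwards [hα.ae_hasDerivAt_integral] with s hs hst
    have h := (hs (Set.uIoc_subset_uIcc hst) a (by simp)).pow (n + 1)
    have h2 := h.deriv
    simp only [Pi.pow_def] at h2
    rw [h2]
    push_cast
    ring
  rw [hcongr, intervalIntegral.integral_const_mul] at key
  have hn : (n : ℝ) + 1 ≠ 0 := by positivity
  simp only [intervalIntegral.integral_same, ne_eq, Nat.succ_ne_zero, not_false_eq_true,
    zero_pow, sub_zero] at key
  rw [eq_div_iff hn, ← key]
  ring

lemma Aiter_zero_eq (x0 x1 : ℝ) (α : ℝ → ℝ) (hα : IntervalIntegrable α volume x0 x1) (j : ℕ) :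
    ∀ t ∈ Set.Icc x0 x1,
      Aiter x0 α 0 j t = (((∫ r in x0..t, α r) ^ j / (j.factorial : ℝ) : ℝ) : ℂ) := by
  induction j with
  | zero => intro t _; simp [Aiter]
  | succ j ih =>
    intro t ht
    have hsub : IntervalIntegrable α volume x0 t := by
      apply hα.mono_set
      rw [Set.uIcc_of_le ht.1, Set.uIcc_of_le (ht.1.trans ht.2)]
      exact Set.Icc_subset_Icc_right ht.2
    have h1 : Aiter x0 α 0 (j + 1) t
        = ∫ s in x0..t, ((α s * (∫ r in x0..s, α r) ^ j / (j.factorial : ℝ) : ℝ) : ℂ) := by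
      simp only [Aiter]
      apply intervalIntegral.integral_congr
      intro s hs
      rw [Set.uIcc_of_le ht.1] at hs
      simp only [ih s ⟨hs.1, hs.2.trans ht.2⟩, Complex.conj_ofReal, mul_zero, Complex.exp_zero]
      push_cast
      ring
    rw [h1, intervalIntegral.integral_ofReal, intervalIntegral.integral_div,
      integral_mul_primitive_pow x0 t α hsub j, Nat.factorial_succ]
    congr 1
    push_cast
    rw [div_div]

/-- Proposition (prop-harmonic-at-zero): `E_α^{(x0,y)}(0) = exp(∫_{x0}^y α)`. -/
theorem harmonic_exponential_at_zero
    (x0 x1 y : ℝ) (hx : x0 < x1) (hy : y ∈ Set.Ioc x0 x1)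
    (α : ℝ → ℝ) (hα : IntegrableOn α (Set.Ioo x0 x1)) :
    harmE x0 y α 0 = Complex.exp (((∫ s in x0..y, α s) : ℝ) : ℂ) := by
  have hi : IntervalIntegrable α volume x0 x1 := by
    rw [intervalIntegrable_iff_integrableOn_Ioo_of_le hx.le]
    exact hα
  rw [Complex.exp_eq_exp_ℂ, NormedSpace.exp_eq_tsum_div]
  unfold harmE
  refine tsum_congr fun j => ?_
  rw [Aiter_zero_eq x0 x1 α hi j y ⟨hy.1.le, hy.2⟩]
  push_cast
  rfl
end

section
/- Fix real numbers x0 < x1 and y ∈ (x0, x1], and let α : ℝ → ℝ be Lebesgue integrable on (x0, x1), with ‖α‖ := ∫_{x0}^{x1} |α|. Then there exists a Lebesgue integrable function g : ℝ → ℂ which vanishes outside [0, 2(y − x0)], satisfies ∫_ℝ |g| ≤ e^{‖α‖} − 1, and such that for every ω ∈ ℝ, E_α^{(x0,y)}(ω) = 1 + ∫_ℝ g(t)·e^{iωt} dt. -/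
open MeasureTheory

/-- `B(t) = ∫_{x0}^t |a|`. -/
noncomputable def hBd (x0 : ℝ) (a : ℝ → ℝ) (t : ℝ) : ℝ := ∫ s in x0..t, |a s|

/-- The kernel in the recursion. -/
noncomputable def hK (x0 : ℝ) (a : ℝ → ℝ) (F : ℝ → ℝ → ℝ) (t s v : ℝ) : ℝ :=
  if x0 < s ∧ s ≤ t then a s * F s (2 * (s - x0) - v) else 0

/-- Densities of the iterates. -/
noncomputable def hG (x0 : ℝ) (a : ℝ → ℝ) : ℕ → ℝ → ℝ → ℝ
  | 0 => fun t v => (1 / 2) * (if x0 < x0 + v / 2 ∧ x0 + v / 2 ≤ t then a (x0 + v / 2) else 0)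
  | j + 1 => fun t v => ∫ s, hK x0 a (hG x0 a j) t s v

lemma hBd_pow (x0 t : ℝ) (a : ℝ → ℝ) (ha : Integrable a) (n : ℕ) :
    ∫ s in x0..t, |a s| * (hBd x0 a s ^ n / n.factorial)
      = hBd x0 a t ^ (n + 1) / (n + 1).factorial := by
  have hi : IntervalIntegrable (fun s => |a s|) volume x0 t := ha.abs.intervalIntegrable
  have hac : AbsolutelyContinuousOnInterval (hBd x0 a) x0 t :=
    hi.absolutelyContinuousOnInterval_intervalIntegral (by simp)
  have hacp : ∀ m : ℕ, AbsolutelyContinuousOnInterval (fun s => hBd x0 a s ^ (m + 1)) x0 t := by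
    intro m
    induction m with
    | zero => simpa using hac
    | succ m ih =>
      have := ih.fun_mul hac
      simpa [pow_succ] using this
  have h0 : hBd x0 a x0 = 0 := by simp [hBd]
  have h1 := ((hacp n).const_mul (1 / ((n + 1).factorial : ℝ))).integral_deriv_eq_sub
  have h2 : ∫ s in x0..t, |a s| * (hBd x0 a s ^ n / n.factorial) =
      ∫ s in x0..t, deriv (fun s => (1 / ((n + 1).factorial : ℝ)) * hBd x0 a s ^ (n + 1)) s := by
    apply intervalIntegral.integral_congr_ae
    filter_upwards [hi.ae_hasDerivAt_integral] with s hs hs'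
    have h3 : HasDerivAt (hBd x0 a) (|a s|) s := hs (Set.uIoc_subset_uIcc hs') x0 (by simp)
    have h4 := ((h3.fun_pow (n + 1)).const_mul (1 / ((n + 1).factorial : ℝ))).deriv
    rw [h4, Nat.factorial_succ]
    have : (n.factorial : ℝ) ≠ 0 := by positivity
    have : (n : ℝ) + 1 ≠ 0 := by positivity
    push_cast
    field_simp
    try simp
  rw [h2]
  refine h1.trans ?_
  simp [h0]
  ring

lemma hK_meas (x0 : ℝ) (a : ℝ → ℝ) (ha : Measurable a) (F : ℝ → ℝ → ℝ)
    (hF : Measurable (fun p : ℝ × ℝ => F p.1 p.2)) :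
    Measurable (fun p : (ℝ × ℝ) × ℝ => hK x0 a F p.1.1 p.2 p.1.2) := by
  unfold hK
  refine Measurable.ite ?_ ?_ measurable_const
  · exact (measurableSet_lt measurable_const measurable_snd).inter
      (measurableSet_le measurable_snd (measurable_fst.comp measurable_fst))
  · refine (ha.comp measurable_snd).mul ?_
    have : Measurable (fun p : (ℝ × ℝ) × ℝ => (p.2, 2 * (p.2 - x0) - p.1.2)) := by fun_prop
    exact hF.comp this

lemma hG_meas (x0 : ℝ) (a : ℝ → ℝ) (ha : Measurable a) (j : ℕ) :
    Measurable (fun p : ℝ × ℝ => hG x0 a j p.1 p.2) := by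
  induction j with
  | zero =>
    simp only [hG]
    refine Measurable.const_mul ?_ _
    refine Measurable.ite ?_ (by fun_prop) measurable_const
    have h1 : MeasurableSet {p : ℝ × ℝ | x0 < x0 + p.2 / 2} :=
      measurableSet_lt (by fun_prop) (by fun_prop)
    have h2 : MeasurableSet {p : ℝ × ℝ | x0 + p.2 / 2 ≤ p.1} :=
      measurableSet_le (by fun_prop) (by fun_prop)
    exact h1.inter h2
  | succ j ih =>
    simp only [hG]
    exact ((hK_meas x0 a ha _ ih).stronglyMeasurable.integral_prod_right').measurable

lemma hG_supp (x0 : ℝ) (a : ℝ → ℝ) (j : ℕ) (t v : ℝ)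
    (hv : v ∉ Set.Icc (0 : ℝ) (2 * (t - x0))) : hG x0 a j t v = 0 := by
  induction j generalizing t v with
  | zero =>
    simp only [hG]
    rw [if_neg, mul_zero]
    rintro ⟨h1, h2⟩
    exact hv ⟨by linarith, by linarith⟩
  | succ j ih =>
    simp only [hG]
    rw [← integral_zero ℝ ℝ]
    congr 1
    ext s
    unfold hK
    split_ifs with h
    · rw [ih, mul_zero]
      rintro ⟨h1, h2⟩
      exact hv ⟨by linarith, by linarith [h.2]⟩
    · rfl

lemma hInd_eq (x0 t : ℝ) {E : Type*} [NormedAddCommGroup E] (f : ℝ → E) :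
    (fun s => if x0 < s ∧ s ≤ t then f s else 0) = (Set.Ioc x0 t).indicator f := by
  ext s
  simp [Set.indicator_apply]

lemma hInd (x0 t : ℝ) (ht : x0 ≤ t) {E : Type*} [NormedAddCommGroup E] [NormedSpace ℝ E]
    (f : ℝ → E) :
    ∫ s, (if x0 < s ∧ s ≤ t then f s else 0) = ∫ s in x0..t, f s := by
  rw [intervalIntegral.integral_of_le ht, ← integral_indicator measurableSet_Ioc, hInd_eq]

lemma hInd_int (x0 t : ℝ) {E : Type*} [NormedAddCommGroup E] [NormedSpace ℝ E]
    (f : ℝ → E) (hf : Integrable f) :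
    Integrable (fun s => if x0 < s ∧ s ≤ t then f s else 0) := by
  rw [hInd_eq]
  exact hf.indicator (measurableSet_Ioc (a := x0) (b := t))

lemma hcov {E : Type*} [NormedAddCommGroup E] [NormedSpace ℝ E] (x0 : ℝ) (f : ℝ → E) :
    ∫ v, f (x0 + v / 2) = (2 : ℝ) • ∫ s, f s := by
  have := Measure.integral_comp_div (fun v => f (x0 + v)) 2
  rw [this, integral_add_left_eq_self]
  simp

lemma hBd_nonneg (x0 t : ℝ) (ht : x0 ≤ t) (a : ℝ → ℝ) : 0 ≤ hBd x0 a t :=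
  intervalIntegral.integral_nonneg ht (fun _ _ => abs_nonneg _)

lemma hBd_mono (x0 s t : ℝ) (hs : x0 ≤ s) (ht : s ≤ t) (a : ℝ → ℝ) (ha : Integrable a) :
    hBd x0 a s ≤ hBd x0 a t :=
  intervalIntegral.integral_mono_interval le_rfl hs ht (ae_of_all _ fun _ => abs_nonneg _)
    ha.abs.intervalIntegrable

lemma hK_int (x0 : ℝ) (a : ℝ → ℝ) (ham : Measurable a) (ha : Integrable a) (F : ℝ → ℝ → ℝ)
    (hF : Measurable (fun p : ℝ × ℝ => F p.1 p.2)) (n : ℕ)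
    (hFi : ∀ s, x0 ≤ s → Integrable (F s))
    (hFb : ∀ s, x0 ≤ s → ∫ v, ‖F s v‖ ≤ hBd x0 a s ^ n / n.factorial)
    (t : ℝ) (ht : x0 ≤ t) :
    Integrable (fun p : ℝ × ℝ => hK x0 a F t p.1 p.2) (volume.prod volume) ∧
    ∫ s, ∫ v, ‖hK x0 a F t s v‖ ≤ hBd x0 a t ^ (n + 1) / (n + 1).factorial := by
  have hm : Measurable (fun p : ℝ × ℝ => hK x0 a F t p.1 p.2) := by
    have : Measurable (fun p : ℝ × ℝ => ((t, p.2), p.1)) := by fun_prop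
    exact (hK_meas x0 a ham F hF).comp this
  have hb : ∀ s, ∫ v, ‖hK x0 a F t s v‖ ≤
      if x0 < s ∧ s ≤ t then |a s| * (hBd x0 a s ^ n / n.factorial) else 0 := by
    intro s
    unfold hK
    split_ifs with h
    · simp only [norm_mul]
      rw [integral_const_mul, integral_sub_left_eq_self (fun v => ‖F s v‖)]
      exact mul_le_mul_of_nonneg_left (hFb s h.1.le) (norm_nonneg _)
    · simp
  have hcont : ContinuousOn (fun s => hBd x0 a s ^ n / n.factorial) (Set.uIcc x0 t) := by
    have := (ha.abs.intervalIntegrable (a := x0) (b :=t)).absolutelyContinuousOnInterval_intervalIntegral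
      (c := x0) (by simp)
    exact (this.continuousOn.pow n).div_const _
  have hdom : Integrable (fun s => if x0 < s ∧ s ≤ t then
      |a s| * (hBd x0 a s ^ n / n.factorial) else 0) := by
    have h1 : IntervalIntegrable (fun s => |a s| * (hBd x0 a s ^ n / n.factorial)) volume x0 t :=
      (ha.abs.intervalIntegrable).mul_continuousOn hcont
    have h2 := (intervalIntegrable_iff_integrableOn_Ioc_of_le ht).1 h1
    rw [hInd_eq]
    exact h2.integrable_indicator measurableSet_Ioc
  have hint : Integrable (fun s => ∫ v, ‖hK x0 a F t s v‖) := by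
    refine hdom.mono' ?_ ?_
    · exact (hm.norm.stronglyMeasurable.integral_prod_right' (ν := volume)).aestronglyMeasurable
    · refine ae_of_all _ fun s => ?_
      rw [Real.norm_of_nonneg (integral_nonneg fun _ => norm_nonneg _)]
      exact hb s
  refine ⟨(integrable_prod_iff hm.aestronglyMeasurable).2 ⟨ae_of_all _ fun s => ?_, hint⟩, ?_⟩
  · simp only [hK]
    split_ifs with h
    · exact ((hFi s h.1.le).comp_sub_left _).const_mul _
    · exact integrable_zero _ _ _
  · refine (integral_mono hint hdom hb).trans ?_
    rw [hInd x0 t ht, hBd_pow x0 t a ha]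

lemma hG_int (x0 : ℝ) (a : ℝ → ℝ) (ham : Measurable a) (ha : Integrable a) (j : ℕ)
    (t : ℝ) (ht : x0 ≤ t) :
    Integrable (hG x0 a j t) ∧
      ∫ v, ‖hG x0 a j t v‖ ≤ hBd x0 a t ^ (j + 1) / (j + 1).factorial := by
  induction j generalizing t with
  | zero =>
    constructor
    · simp only [hG]
      refine Integrable.const_mul ?_ _
      exact ((hInd_int x0 t a ha).comp_add_left x0).comp_div two_ne_zero
    · simp only [hG, norm_mul]
      rw [integral_const_mul, hcov x0 (fun s => ‖if x0 < s ∧ s ≤ t then a s else 0‖)]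
      have : ∀ s, ‖if x0 < s ∧ s ≤ t then a s else 0‖ = if x0 < s ∧ s ≤ t then |a s| else 0 := by
        intro s; split_ifs <;> simp
      simp only [this]
      rw [hInd x0 t ht]
      simp [hBd]
  | succ j ih =>
    obtain ⟨h1, h2⟩ := hK_int x0 a ham ha _ (hG_meas x0 a ham j) (j + 1)
      (fun s hs => (ih s hs).1) (fun s hs => (ih s hs).2) t ht
    refine ⟨h1.integral_prod_right, le_trans ?_ h2⟩
    rw [integral_integral_swap (f := fun s v => ‖hK x0 a (hG x0 a j) t s v‖) h1.norm]
    simp only [hG]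
    refine integral_mono h1.integral_prod_right.norm h1.norm.integral_prod_right ?_
    intro v
    exact norm_integral_le_integral_norm _

lemma hA_eq (x0 x1 : ℝ) (α a : ℝ → ℝ) (ham : Measurable a) (ha : Integrable a)
    (hae : ∀ᵐ s, s ∈ Set.Ioc x0 x1 → α s = a s) (ω : ℝ) (j : ℕ) (t : ℝ) (ht : x0 ≤ t)
    (ht1 : t ≤ x1) :
    Aiter x0 α ω (j + 1) t = ∫ v, (hG x0 a j t v : ℂ) * Complex.exp (Complex.I * ω * v) := by
  induction j generalizing t with
  | zero =>
    have h0 : ∀ v : ℝ, (hG x0 a 0 t v : ℂ) * Complex.exp (Complex.I * ω * v) =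
      (fun s : ℝ => (1 / 2 : ℂ) * (if x0 < s ∧ s ≤ t then
        (a s : ℂ) * Complex.exp (2 * Complex.I * ((s : ℂ) - (x0 : ℂ)) * ω) else 0)) (x0 + v / 2) := by
      intro v
      simp only [hG]
      split_ifs with h
      · push_cast
        rw [mul_assoc]
        congr 3
        ring
      · simp
    rw [integral_congr_ae (ae_of_all _ h0)]
    rw [hcov x0 (fun s : ℝ => (1 / 2 : ℂ) * (if x0 < s ∧ s ≤ t then
        (a s : ℂ) * Complex.exp (2 * Complex.I * ((s : ℂ) - (x0 : ℂ)) * ω) else 0)),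
      integral_const_mul, hInd x0 t ht]
    simp only [Aiter, map_one, mul_one]
    rw [intervalIntegral.integral_congr_ae (g := fun s : ℝ => (a s : ℂ) *
      Complex.exp (2 * Complex.I * ((s : ℂ) - (x0 : ℂ)) * ω))]
    · simp
    · filter_upwards [hae] with s hs hs'
      rw [Set.uIoc_of_le ht] at hs'
      rw [hs ⟨hs'.1, hs'.2.trans ht1⟩]
  | succ j ih =>
    obtain ⟨h1, h2⟩ := hK_int x0 a ham ha _ (hG_meas x0 a ham j) (j + 1)
      (fun s hs => (hG_int x0 a ham ha j s hs).1) (fun s hs => (hG_int x0 a ham ha j s hs).2) t ht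
    have h3 : Integrable (fun p : ℝ × ℝ => (hK x0 a (hG x0 a j) t p.1 p.2 : ℂ) *
        Complex.exp (Complex.I * ω * p.2)) (volume.prod volume) := by
      refine h1.ofReal.mul_bdd (c := 1) ?_ ?_
      · exact (by fun_prop : Continuous fun p : ℝ × ℝ =>
          Complex.exp (Complex.I * ω * p.2)).aestronglyMeasurable
      · refine ae_of_all _ fun p => ?_
        rw [Complex.norm_exp]
        simp
    have h4 : ∀ v : ℝ, (hG x0 a (j + 1) t v : ℂ) * Complex.exp (Complex.I * ω * v) =
        ∫ s, (hK x0 a (hG x0 a j) t s v : ℂ) * Complex.exp (Complex.I * ω * v) := by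
      intro v
      rw [integral_mul_const, integral_complex_ofReal]
      rfl
    simp only [h4]
    rw [← integral_integral_swap (f := fun s v => (hK x0 a (hG x0 a j) t s v : ℂ) *
        Complex.exp (Complex.I * ω * v)) h3]
    have h5 : ∀ s : ℝ, ∫ v : ℝ, (hK x0 a (hG x0 a j) t s v : ℂ) * Complex.exp (Complex.I * ω * v) =
      if x0 < s ∧ s ≤ t then (a s : ℂ) * Complex.exp (2 * Complex.I * ((s : ℂ) - (x0 : ℂ)) * ω)
          * (starRingEnd ℂ) (Aiter x0 α ω (j + 1) s) else 0 := by
      intro s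
      unfold hK
      split_ifs with h
      · rw [ih s h.1.le (h.2.trans ht1), ← integral_conj, ← integral_const_mul]
        rw [← integral_sub_left_eq_self _ volume (2 * (s - x0))]
        congr 1
        ext v
        push_cast
        simp only [map_mul, Complex.conj_ofReal, ← Complex.exp_conj, Complex.conj_I, sub_sub_cancel]
        have he : Complex.exp (Complex.I * ω * (2 * ((s : ℂ) - x0) - v)) =
            Complex.exp (2 * Complex.I * ((s : ℂ) - x0) * ω) *
              Complex.exp (-Complex.I * ω * v) := by
          rw [← Complex.exp_add]
          congr 1
          ring
        rw [he]
        ring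
      · simp
    simp only [h5]
    rw [hInd x0 t ht, Aiter]
    apply intervalIntegral.integral_congr_ae
    filter_upwards [hae] with s hs hs'
    rw [Set.uIoc_of_le ht] at hs'
    rw [hs ⟨hs'.1, hs'.2.trans ht1⟩]

/-- Proposition (prop-harmonic-2)(iii): `h = E_α^{(x0,y)} − 1` is the Fourier transform of
an integrable density `g` supported in `[0, 2(y − x0)]` with `∫|g| ≤ e^{‖α‖} − 1`. -/
theorem harmonic_exponential_fourier_representation
    (x0 x1 y : ℝ) (hx : x0 < x1) (hy : y ∈ Set.Ioc x0 x1)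
    (α : ℝ → ℝ) (hα : IntegrableOn α (Set.Ioo x0 x1))
    (N : ℝ) (hN : N = ∫ x in x0..x1, |α x|) :
    ∃ g : ℝ → ℂ,
      (∀ t ∉ Set.Icc (0 : ℝ) (2 * (y - x0)), g t = 0) ∧
      Integrable g ∧
      (∫ t : ℝ, ‖g t‖) ≤ Real.exp N - 1 ∧
      ∀ ω : ℝ, harmE x0 y α (ω : ℂ)
        = 1 + ∫ t : ℝ, g t * Complex.exp (Complex.I * (ω : ℂ) * (t : ℂ)) := by
  have hα' : IntegrableOn α (Set.Ioc x0 x1) := (integrableOn_Ioc_iff_integrableOn_Ioo).2 hα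
  have hαm := hα'.aestronglyMeasurable
  obtain ⟨a, ham, ha, hae⟩ : ∃ a : ℝ → ℝ, Measurable a ∧ Integrable a ∧
      ∀ᵐ s, s ∈ Set.Ioc x0 x1 → α s = a s := by
    refine ⟨(Set.Ioc x0 x1).indicator (hαm.mk α), ?_, ?_, ?_⟩
    · exact hαm.stronglyMeasurable_mk.measurable.indicator measurableSet_Ioc
    · have h : IntegrableOn (hαm.mk α) (Set.Ioc x0 x1) := Integrable.congr hα' hαm.ae_eq_mk
      exact h.integrable_indicator measurableSet_Ioc
    · filter_upwards [(ae_restrict_iff' measurableSet_Ioc).1 hαm.ae_eq_mk] with s hs hs'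
      rw [Set.indicator_of_mem hs', hs hs']
  have hNB : N = hBd x0 a x1 := by
    rw [hN]
    apply intervalIntegral.integral_congr_ae
    filter_upwards [hae] with s hs hs'
    rw [Set.uIoc_of_le hx.le] at hs'
    rw [hs hs']
  have hBN : hBd x0 a y ≤ N := hNB ▸ hBd_mono x0 y x1 hy.1.le hy.2 a ha
  have hB0 := hBd_nonneg x0 y hy.1.le a
  set b := hBd x0 a y with hb
  have hsum : HasSum (fun j : ℕ => b ^ (j + 1) / (j + 1).factorial) (Real.exp b - 1) := by
    have h := NormedSpace.expSeries_div_hasSum_exp b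
    rw [← Real.exp_eq_exp_ℝ] at h
    have := (hasSum_nat_add_iff' 1).2 h
    simpa using this
  have hGi := fun j => (hG_int x0 a ham ha j y hy.1.le).1
  have hGb := fun j => (hG_int x0 a ham ha j y hy.1.le).2
  have hsG : Summable (fun j => ∫ v, ‖hG x0 a j y v‖) :=
    Summable.of_nonneg_of_le (fun j => integral_nonneg fun _ => norm_nonneg _) hGb hsum.summable
  have hle : ∑' j, ∫ v, ‖hG x0 a j y v‖ ≤ Real.exp N - 1 := by
    calc _ ≤ ∑' j : ℕ, b ^ (j + 1) / (j + 1).factorial := hsG.tsum_le_tsum hGb hsum.summable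
      _ = Real.exp b - 1 := hsum.tsum_eq
      _ ≤ _ := by gcongr
  have hGm : ∀ j, Measurable (hG x0 a j y) := fun j =>
    (hG_meas x0 a ham j).comp (measurable_const.prodMk measurable_id)
  have hbound : ∫⁻ v, ‖∑' j, (hG x0 a j y v : ℂ)‖ₑ ≤ ENNReal.ofReal (Real.exp N - 1) := by
    calc ∫⁻ v, ‖∑' j, (hG x0 a j y v : ℂ)‖ₑ ≤ ∫⁻ v, ∑' j, ‖(hG x0 a j y v : ℂ)‖ₑ :=
          lintegral_mono fun v => enorm_tsum_le_tsum_enorm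
      _ = ∑' j, ∫⁻ v, ‖(hG x0 a j y v : ℂ)‖ₑ :=
          lintegral_tsum fun j => (hGm j).complex_ofReal.enorm.aemeasurable
      _ = ∑' j, ENNReal.ofReal (∫ v, ‖hG x0 a j y v‖) := by
          congr 1
          ext j
          rw [ofReal_integral_norm_eq_lintegral_enorm (hGi j)]
          congr 1
          ext v
          rw [← ofReal_norm, ← ofReal_norm, Complex.norm_real]
      _ = ENNReal.ofReal (∑' j, ∫ v, ‖hG x0 a j y v‖) :=
          (ENNReal.ofReal_tsum_of_nonneg (fun j => integral_nonneg fun _ => norm_nonneg _) hsG).symm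
      _ ≤ _ := ENNReal.ofReal_le_ofReal hle
  have hmeas : Measurable (fun v => ∑' j, (hG x0 a j y v : ℂ)) :=
    Measurable.tsum fun j => (hGm j).complex_ofReal
  refine ⟨fun v => ∑' j, (hG x0 a j y v : ℂ), ?_, ?_, ?_, ?_⟩
  · intro t ht
    simp [hG_supp x0 a _ y t ht]
  · exact ⟨hmeas.aestronglyMeasurable, hbound.trans_lt ENNReal.ofReal_lt_top⟩
  · rw [integral_norm_eq_lintegral_enorm hmeas.aestronglyMeasurable]
    refine ENNReal.toReal_le_of_le_ofReal ?_ hbound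
    have := Real.add_one_le_exp N
    linarith
  · intro ω
    have hn : ∀ v : ℝ, ‖Complex.exp (Complex.I * ω * v)‖ = 1 := by
      intro v
      rw [Complex.norm_exp]
      simp
    have h1 := hasSum_integral_of_summable_integral_norm (μ := volume)
      (F := fun j (v : ℝ) => (hG x0 a j y v : ℂ) * Complex.exp (Complex.I * ω * v))
      (fun j => (hGi j).ofReal.mul_bdd (c := 1)
        (by fun_prop : Continuous fun v : ℝ =>
          Complex.exp (Complex.I * ω * v)).aestronglyMeasurable
        (ae_of_all _ fun v => (hn v).le))
      (by simpa only [norm_mul, hn, mul_one, Complex.norm_real] using hsG)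
    simp only [← hA_eq x0 x1 α a ham ha hae ω _ y hy.1.le hy.2, tsum_mul_right] at h1
    have h2 := (hasSum_nat_add_iff (f := fun j => Aiter x0 α ω j y) 1).1 h1
    rw [harmE, h2.tsum_eq]
    simp [Aiter, add_comm]
end

section
/- Fix real numbers x0 < x1 and y ∈ (x0, x1], and let α : ℝ → ℝ be Lebesgue integrable on (x0, x1). Then E_α^{(x0,y)}(ω) → 1 as |ω| → ∞ along real ω. -/
open MeasureTheory

lemma harm_norm_exp (x0 s ω : ℝ) :
    ‖Complex.exp (2 * Complex.I * ((s : ℂ) - (x0 : ℂ)) * (ω : ℂ))‖ = 1 := by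
  have : 2 * Complex.I * ((s : ℂ) - (x0 : ℂ)) * (ω : ℂ)
      = ((2 * (s - x0) * ω : ℝ) : ℂ) * Complex.I := by
    push_cast; ring
  rw [this, Complex.norm_exp_ofReal_mul_I]

lemma harm_integrable (x0 : ℝ) (α : ℝ → ℝ) (hα : Integrable α) (ω : ℝ) (g : ℝ → ℂ)
    (hg : Continuous g) (a b : ℝ) :
    IntervalIntegrable (fun s => (α s : ℂ)
      * Complex.exp (2 * Complex.I * ((s : ℂ) - (x0 : ℂ)) * (ω : ℂ))
          * (starRingEnd ℂ) (g s)) volume a b := by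
  have h1 : IntervalIntegrable (fun s => (α s : ℂ)) volume a b :=
    (hα.ofReal (𝕜 := ℂ)).intervalIntegrable
  have h2 := h1.mul_continuousOn (g := fun s : ℝ =>
      Complex.exp (2 * Complex.I * ((s : ℂ) - (x0 : ℂ)) * (ω : ℂ))
          * (starRingEnd ℂ) (g s)) (by
        apply Continuous.continuousOn
        have := Complex.continuous_conj.comp hg
        exact Continuous.mul (by fun_prop) this)
  simpa only [mul_assoc] using h2

lemma Aiter_continuous (x0 : ℝ) (α : ℝ → ℝ) (hα : Integrable α) (ω : ℝ) (j : ℕ) :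
    Continuous (Aiter x0 α (ω : ℂ) j) := by
  induction j with
  | zero => simpa only [Aiter] using continuous_const
  | succ j ih =>
    simp only [Aiter]
    exact intervalIntegral.continuous_primitive
      (fun a b => harm_integrable x0 α hα ω _ ih a b) x0

lemma harm_pow_integral (x0 t : ℝ) (b : ℝ → ℝ) (hb : Integrable b) (n : ℕ) :
    ∫ s in x0..t, ((n : ℝ) + 1) * (∫ u in x0..s, b u) ^ n * b s
      = (∫ u in x0..t, b u) ^ (n + 1) := by
  have hbi : IntervalIntegrable b volume x0 t := hb.intervalIntegrable
  have hac : AbsolutelyContinuousOnInterval (fun s => ∫ u in x0..s, b u) x0 t :=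
    hbi.absolutelyContinuousOnInterval_intervalIntegral (c := x0) (by simp)
  have hpow : ∀ m : ℕ, AbsolutelyContinuousOnInterval
      (fun s => (∫ u in x0..s, b u) ^ (m + 1)) x0 t := by
    intro m
    induction m with
    | zero => simpa using hac
    | succ m ih =>
      have := ih.fun_mul hac
      simpa only [pow_succ _ (m + 1)] using this
  have h := (hpow n).integral_deriv_eq_sub
  simp only [intervalIntegral.integral_same, ne_eq, Nat.succ_ne_zero, not_false_eq_true,
    zero_pow, sub_zero] at h
  rw [← h]
  apply intervalIntegral.integral_congr_ae
  filter_upwards [hbi.ae_hasDerivAt_integral] with s hs hs'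
  have h1 := (hs (Set.uIoc_subset_uIcc hs') x0 (by simp)).pow (n + 1)
  have h2 := h1.deriv
  simp only [Nat.add_sub_cancel, Nat.cast_add, Nat.cast_one] at h2
  exact h2.symm

lemma Aiter_bound (x0 : ℝ) (α : ℝ → ℝ) (hα : Integrable α) (ω : ℝ) (j : ℕ) :
    ∀ t, x0 ≤ t → ‖Aiter x0 α (ω : ℂ) j t‖
      ≤ (∫ u in x0..t, |α u|) ^ j / (j.factorial : ℝ) := by
  induction j with
  | zero => intro t _; simp [Aiter]
  | succ j ih =>
    intro t ht
    have hb : Integrable (fun u => |α u|) := hα.abs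
    have hc : Continuous (fun s => ∫ u in x0..s, |α u|) := hb.continuous_primitive x0
    have h1 := harm_pow_integral x0 t (fun u => |α u|) hb j
    have h2 : (∫ u in x0..t, |α u|) ^ (j + 1) / ((j + 1).factorial : ℝ)
        = ∫ s in x0..t, |α s| * ((∫ u in x0..s, |α u|) ^ j / (j.factorial : ℝ)) := by
      rw [← h1, ← intervalIntegral.integral_div]
      congr 1
      ext s
      rw [Nat.factorial_succ]
      push_cast
      have : (j.factorial : ℝ) ≠ 0 := by positivity
      have : (j : ℝ) + 1 ≠ 0 := by positivity
      field_simp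
    rw [h2]
    simp only [Aiter]
    apply intervalIntegral.norm_integral_le_of_norm_le ht
    · filter_upwards with s hs
      rw [norm_mul, norm_mul, harm_norm_exp, mul_one, RCLike.norm_conj, Complex.norm_real,
        Real.norm_eq_abs]
      exact mul_le_mul_of_nonneg_left (ih s hs.1.le) (abs_nonneg _)
    · exact (hb.intervalIntegrable).mul_continuousOn
        ((hc.pow j).div_const _).continuousOn

lemma harm_cocompact_cg : (Filter.cocompact ℝ).IsCountablyGenerated := by
  rw [cocompact_eq_atBot_atTop]
  infer_instance

lemma Aiter_one_tendsto (x0 : ℝ) (α : ℝ → ℝ) (t : ℝ) (ht : x0 ≤ t) :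
    Filter.Tendsto (fun ω : ℝ => Aiter x0 α (ω : ℂ) 1 t) (Filter.cocompact ℝ) (nhds 0) := by
  have h := Real.tendsto_integral_exp_smul_cocompact
    ((Set.Ioc x0 t).indicator (fun s => (α s : ℂ)))
  have hm : Filter.Tendsto (fun ω : ℝ => ω * (-Real.pi⁻¹)) (Filter.cocompact ℝ)
      (Filter.cocompact ℝ) :=
    (Homeomorph.mulRight₀ (-Real.pi⁻¹) (by simp [Real.pi_ne_zero])).isClosedEmbedding.tendsto_cocompact
  have h' := (h.comp hm).norm
  rw [norm_zero] at h'
  rw [tendsto_zero_iff_norm_tendsto_zero]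
  refine h'.congr fun ω => ?_
  simp only [Function.comp, Aiter]
  rw [intervalIntegral.integral_of_le ht, ← integral_indicator measurableSet_Ioc]
  have : ∀ v : ℝ, (Set.Ioc x0 t).indicator (fun s : ℝ => (α s : ℂ)
      * Complex.exp (2 * Complex.I * ((s : ℂ) - (x0 : ℂ)) * (ω : ℂ))
          * (starRingEnd ℂ) (1 : ℂ)) v
      = Complex.exp (2 * Complex.I * (((0 : ℝ) : ℂ) - (x0 : ℂ)) * (ω : ℂ)) *
        (Real.fourierChar (-(v * (ω * -Real.pi⁻¹)))
          • (Set.Ioc x0 t).indicator (fun s => (α s : ℂ)) v) := by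
    intro v
    by_cases hv : v ∈ Set.Ioc x0 t
    · simp only [Set.indicator_of_mem hv, map_one, mul_one, Circle.smul_def,
        Real.fourierChar_apply, smul_eq_mul]
      rw [← mul_assoc, ← Complex.exp_add, mul_comm]
      congr 2
      have : (Real.pi : ℂ) ≠ 0 := by exact_mod_cast Real.pi_ne_zero
      push_cast
      field_simp
      ring
    · simp [Set.indicator_of_notMem hv]
  simp_rw [this]
  rw [integral_const_mul, norm_mul, harm_norm_exp, one_mul]

lemma Aiter_tendsto (x0 : ℝ) (α : ℝ → ℝ) (hα : Integrable α) (j : ℕ) :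
    ∀ t, x0 ≤ t → Filter.Tendsto (fun ω : ℝ => Aiter x0 α (ω : ℂ) (j + 1) t)
      (Filter.cocompact ℝ) (nhds 0) := by
  induction j with
  | zero => intro t ht; exact Aiter_one_tendsto x0 α t ht
  | succ j ih =>
    intro t ht
    have := harm_cocompact_cg
    have hb : Integrable (fun u => |α u|) := hα.abs
    have hc : Continuous (fun s => ∫ u in x0..s, |α u|) := hb.continuous_primitive x0
    have key := intervalIntegral.tendsto_integral_filter_of_dominated_convergence
      (μ := volume) (a := x0) (b := t) (l := Filter.cocompact ℝ)
      (F := fun (ω : ℝ) (s : ℝ) => (α s : ℂ)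
        * Complex.exp (2 * Complex.I * ((s : ℂ) - (x0 : ℂ)) * (ω : ℂ))
          * (starRingEnd ℂ) (Aiter x0 α (ω : ℂ) (j + 1) s)) (f := fun _ => 0)
      (fun s => |α s| * ((∫ u in x0..s, |α u|) ^ (j + 1) / ((j + 1).factorial : ℝ)))
      (Filter.Eventually.of_forall fun ω =>
        (intervalIntegrable_iff.1 (harm_integrable x0 α hα ω _
          (Aiter_continuous x0 α hα ω (j + 1)) x0 t)).aestronglyMeasurable)
      (Filter.Eventually.of_forall fun ω => by
        filter_upwards with s hs
        rw [Set.uIoc_of_le ht] at hs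
        rw [norm_mul, norm_mul, harm_norm_exp, mul_one, RCLike.norm_conj, Complex.norm_real,
          Real.norm_eq_abs]
        exact mul_le_mul_of_nonneg_left (Aiter_bound x0 α hα ω (j + 1) s hs.1.le) (abs_nonneg _))
      ((hb.intervalIntegrable).mul_continuousOn
        ((hc.pow (j + 1)).div_const _).continuousOn)
      (by
        filter_upwards with s hs
        rw [Set.uIoc_of_le ht] at hs
        have h0 := ((ih s hs.1.le).norm).const_mul |α s|
        rw [norm_zero, mul_zero] at h0
        rw [tendsto_zero_iff_norm_tendsto_zero]
        refine h0.congr fun ω => ?_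
        rw [norm_mul, norm_mul, harm_norm_exp, mul_one, RCLike.norm_conj, Complex.norm_real,
          Real.norm_eq_abs])
    rw [intervalIntegral.integral_zero] at key
    rw [show (fun ω : ℝ => Aiter x0 α (ω : ℂ) (j + 1 + 1) t) = fun ω : ℝ => ∫ s in x0..t, (α s : ℂ)
        * Complex.exp (2 * Complex.I * ((s : ℂ) - (x0 : ℂ)) * (ω : ℂ))
          * (starRingEnd ℂ) (Aiter x0 α (ω : ℂ) (j + 1) s) from by
        funext ω; rw [Aiter]]
    exact key

lemma harmE_tendsto (x0 y : ℝ) (α : ℝ → ℝ) (hα : Integrable α) (hy : x0 ≤ y) :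
    Filter.Tendsto (fun ω : ℝ => harmE x0 y α (ω : ℂ)) (Filter.cocompact ℝ) (nhds 1) := by
  unfold harmE
  have h := tendsto_tsum_of_dominated_convergence (𝓕 := Filter.cocompact ℝ)
    (f := fun (ω : ℝ) (j : ℕ) => Aiter x0 α (ω : ℂ) j y)
    (g := fun j : ℕ => if j = 0 then (1 : ℂ) else 0)
    (Real.summable_pow_div_factorial (∫ u in x0..y, |α u|))
    (by
      intro j
      cases j with
      | zero => simp [Aiter]
      | succ j => simpa using Aiter_tendsto x0 α hα j y hy)
    (Filter.Eventually.of_forall fun ω j => Aiter_bound x0 α hα ω j y hy)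
  simpa using h

lemma Aiter_congr (x0 x1 : ℝ) (α β : ℝ → ℝ) (h : ∀ s ∈ Set.Ioc x0 x1, α s = β s) (ω : ℂ)
    (j : ℕ) : ∀ t ∈ Set.Icc x0 x1, Aiter x0 α ω j t = Aiter x0 β ω j t := by
  induction j with
  | zero => intro t _; simp [Aiter]
  | succ j ih =>
    intro t ht
    simp only [Aiter]
    apply intervalIntegral.integral_congr_ae
    filter_upwards with s hs
    rw [Set.uIoc_of_le ht.1] at hs
    rw [h s ⟨hs.1, hs.2.trans ht.2⟩, ih s ⟨hs.1.le, hs.2.trans ht.2⟩]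

/-- Corollary (cor-harmonic-exponential-bounded): `E_α^{(x0,y)}(ω) → 1` as `|ω| → ∞`
along real `ω`. -/
theorem harmonic_exponential_tendsto_one
    (x0 x1 y : ℝ) (hx : x0 < x1) (hy : y ∈ Set.Ioc x0 x1)
    (α : ℝ → ℝ) (hα : IntegrableOn α (Set.Ioo x0 x1)) :
    Filter.Tendsto (fun ω : ℝ => harmE x0 y α (ω : ℂ)) (Filter.cocompact ℝ) (nhds 1) := by
  have hint : Integrable ((Set.Ioc x0 x1).indicator α) := by
    rw [integrable_indicator_iff measurableSet_Ioc, integrableOn_Ioc_iff_integrableOn_Ioo]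
    exact hα
  refine (harmE_tendsto x0 y _ hint hy.1.le).congr fun ω => ?_
  unfold harmE
  congr 1
  funext j
  exact Aiter_congr x0 x1 _ α (fun s hs => Set.indicator_of_mem hs α) _ j y ⟨hy.1.le, hy.2⟩
end

section
/- Fix real numbers x0 < x1 and let α : ℝ → ℝ be Lebesgue integrable on (x0, x1), with ‖α‖ := ∫_{x0}^{x1} |α|. Then for every ω ∈ ℝ: e^{−‖α‖} ≤ |E_α^{(x0,x1)}(ω)|, e^{−‖α‖} ≤ |E_{−α}^{(x0,x1)}(ω)|, and e^{−‖α‖} ≤ |E_α^{(x0,x1)}(ω) + E_{−α}^{(x0,x1)}(ω)|. -/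
open MeasureTheory

lemma hexp_ac_congr {f g : ℝ → ℝ} {a b : ℝ} (hf : AbsolutelyContinuousOnInterval f a b)
    (h : ∀ x ∈ Set.uIcc a b, f x = g x) : AbsolutelyContinuousOnInterval g a b := by
  rw [absolutelyContinuousOnInterval_iff] at hf ⊢
  intro ε hε
  obtain ⟨δ, hδ, H⟩ := hf ε hε
  refine ⟨δ, hδ, fun E hE hs => ?_⟩
  refine lt_of_eq_of_lt (Finset.sum_congr rfl fun i hi => ?_) (H E hE hs)
  have := hE.1 i hi
  rw [h _ this.1, h _ this.2]

lemma hexp_ac_pow {f : ℝ → ℝ} {a b : ℝ} (hf : AbsolutelyContinuousOnInterval f a b) (n : ℕ) :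
    AbsolutelyContinuousOnInterval (fun x => f x ^ (n + 1)) a b := by
  induction n with
  | zero => simpa using hf
  | succ n ih => simpa only [pow_succ _ (n + 1)] using! ih.mul hf

/-- `∫ |α| M^j / j! = M^{j+1}/(j+1)!` for `M` the primitive of `|α|`. -/
lemma hexp_int_pow {g : ℝ → ℝ} {a b : ℝ} (hg : IntervalIntegrable g volume a b) (j : ℕ) :
    ∫ s in a..b, g s * ((∫ v in a..s, g v) ^ j / (j.factorial : ℝ))
      = (∫ v in a..b, g v) ^ (j + 1) / ((j + 1).factorial : ℝ) := by
  have hac := hexp_ac_pow (hg.absolutelyContinuousOnInterval_intervalIntegral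
    (c := a) (by simp)) j
  have h1 := hac.integral_deriv_eq_sub
  have h2 : ∫ s in a..b, g s * ((∫ v in a..s, g v) ^ j / (j.factorial : ℝ))
      = ∫ s in a..b, deriv (fun x => (∫ v in a..x, g v) ^ (j + 1)) s *
          (1 / ((j + 1).factorial : ℝ)) := by
    apply intervalIntegral.integral_congr_ae
    filter_upwards [hg.ae_hasDerivAt_integral] with x hx hx2
    have h3 := hx (Set.uIoc_subset_uIcc hx2) a (by simp)
    rw [(h3.fun_pow (j + 1)).deriv, Nat.factorial_succ]
    push_cast
    have : (j.factorial : ℝ) ≠ 0 := by positivity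
    have : (j : ℝ) + 1 ≠ 0 := by positivity
    field_simp
  rw [h2, intervalIntegral.integral_mul_const, h1]
  simp [div_eq_mul_inv]

/-- the kernel -/
noncomputable def hexpK (x0 : ℝ) (α : ℝ → ℝ) (ω : ℝ) (s : ℝ) : ℂ :=
  (α s : ℂ) * Complex.exp (2 * Complex.I * ((s : ℂ) - (x0 : ℂ)) * (ω : ℂ))

lemma hexpK_norm (x0 : ℝ) (α : ℝ → ℝ) (ω s : ℝ) : ‖hexpK x0 α ω s‖ = |α s| := by
  have : 2 * Complex.I * ((s : ℂ) - (x0 : ℂ)) * (ω : ℂ)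
      = ((2 * (s - x0) * ω : ℝ) : ℂ) * Complex.I := by
    push_cast; ring
  rw [hexpK, norm_mul, this, Complex.norm_exp_ofReal_mul_I]
  simp

lemma hexpK_int {x0 x1 : ℝ} {α : ℝ → ℝ} (hα : IntervalIntegrable α volume x0 x1) (ω : ℝ) :
    IntervalIntegrable (hexpK x0 α ω) volume x0 x1 := by
  have h : IntervalIntegrable (fun s => (α s : ℂ)) volume x0 x1 :=
    ⟨hα.1.ofReal, hα.2.ofReal⟩
  unfold hexpK
  refine h.mul_continuousOn (Continuous.continuousOn ?_)
  fun_prop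

lemma hexp_conj_cont {f : ℝ → ℂ} {s : Set ℝ} (hf : ContinuousOn f s) :
    ContinuousOn (fun x => (starRingEnd ℂ) (f x)) s :=
  Complex.continuous_conj.comp_continuousOn hf

lemma hexp_cont {x0 x1 : ℝ} {α : ℝ → ℝ}
    (hα : IntervalIntegrable α volume x0 x1) (ω : ℝ) (j : ℕ) :
    ContinuousOn (Aiter x0 α ω j) (Set.uIcc x0 x1) := by
  induction j with
  | zero => exact continuousOn_const
  | succ j ih =>
    have h := (hexpK_int hα ω).mul_continuousOn (hexp_conj_cont ih)
    exact intervalIntegral.continuousOn_primitive_interval'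
      h (by simp)

lemma hexp_bound {x0 x1 : ℝ} {α : ℝ → ℝ}
    (hα : IntervalIntegrable α volume x0 x1) (ω : ℝ) (j : ℕ) :
    ∀ t ∈ Set.Icc x0 x1, ‖Aiter x0 α ω j t‖ ≤ (∫ s in x0..t, |α s|) ^ j / (j.factorial : ℝ) := by
  induction j with
  | zero => intro t _; simp [Aiter]
  | succ j ih =>
    intro t ht
    have hsub : Set.uIcc x0 t ⊆ Set.uIcc x0 x1 := by
      rw [Set.uIcc_of_le ht.1, Set.uIcc_of_le (ht.1.trans ht.2)]
      exact Set.Icc_subset_Icc_right ht.2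
    have hαt : IntervalIntegrable α volume x0 t := hα.mono_set hsub
    rw [← hexp_int_pow hαt.abs j]
    refine intervalIntegral.norm_integral_le_of_norm_le ht.1 ?_ ?_
    · refine Filter.Eventually.of_forall fun s hs => ?_
      change ‖hexpK x0 α ω s * _‖ ≤ _
      rw [norm_mul, hexpK_norm, RCLike.norm_conj]
      exact mul_le_mul_of_nonneg_left (ih s ⟨hs.1.le, hs.2.trans ht.2⟩) (abs_nonneg _)
    · refine hαt.abs.mul_continuousOn ?_
      exact ((intervalIntegral.continuousOn_primitive_interval' hαt.abs (by simp)).pow j).div_const _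

lemma hexp_mono {x0 x1 t : ℝ} {α : ℝ → ℝ}
    (hα : IntervalIntegrable α volume x0 x1) (ht : t ∈ Set.Icc x0 x1) :
    (∫ s in x0..t, |α s|) ≤ ∫ s in x0..x1, |α s| :=
  intervalIntegral.integral_mono_interval le_rfl ht.1 ht.2
    (Filter.Eventually.of_forall fun _ => abs_nonneg _) hα.abs

lemma hexp_bound' {x0 x1 : ℝ} {α : ℝ → ℝ}
    (hα : IntervalIntegrable α volume x0 x1) (ω : ℝ) (j : ℕ) :
    ∀ t ∈ Set.Icc x0 x1, ‖Aiter x0 α ω j t‖ ≤ (∫ s in x0..x1, |α s|) ^ j / (j.factorial : ℝ) := by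
  intro t ht
  refine (hexp_bound hα ω j t ht).trans ?_
  have h0 : 0 ≤ ∫ s in x0..t, |α s| :=
    intervalIntegral.integral_nonneg ht.1 fun _ _ => abs_nonneg _
  have := hexp_mono hα ht
  gcongr

lemma hexp_summable {x0 x1 : ℝ} {α : ℝ → ℝ}
    (hα : IntervalIntegrable α volume x0 x1) (ω : ℝ) {t : ℝ} (ht : t ∈ Set.Icc x0 x1) :
    Summable (fun j => Aiter x0 α ω j t) :=
  Summable.of_norm_bounded (Real.summable_pow_div_factorial _)
    (fun j => hexp_bound' hα ω j t ht)

lemma hexp_upper {x0 x1 : ℝ} (hx : x0 ≤ x1) {α : ℝ → ℝ}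
    (hα : IntervalIntegrable α volume x0 x1) (ω : ℝ) :
    ‖harmE x0 x1 α ω‖ ≤ Real.exp (∫ s in x0..x1, |α s|) := by
  have h : HasSum (fun j : ℕ => (∫ s in x0..x1, |α s|) ^ j / (j.factorial : ℝ))
      (Real.exp (∫ s in x0..x1, |α s|)) := by
    rw [Real.exp_eq_exp_ℝ]
    exact NormedSpace.expSeries_div_hasSum_exp _
  exact tsum_of_norm_bounded h (fun j => hexp_bound' hα ω j x1 ⟨hx, le_rfl⟩)

lemma hexp_E_cont {x0 x1 : ℝ} (hx : x0 ≤ x1) {α : ℝ → ℝ}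
    (hα : IntervalIntegrable α volume x0 x1) (ω : ℝ) :
    ContinuousOn (fun t => harmE x0 t α ω) (Set.uIcc x0 x1) := by
  unfold harmE
  refine continuousOn_tsum (fun j => hexp_cont hα ω j)
    (Real.summable_pow_div_factorial (∫ s in x0..x1, |α s|)) ?_
  intro j t ht
  rw [Set.uIcc_of_le hx] at ht
  exact hexp_bound' hα ω j t ht

lemma hexp_eq {x0 x1 : ℝ} {α : ℝ → ℝ}
    (hα : IntervalIntegrable α volume x0 x1) (ω : ℝ) {t : ℝ} (ht : t ∈ Set.Icc x0 x1) :
    harmE x0 t α ω = 1 + ∫ s in x0..t, hexpK x0 α ω s * (starRingEnd ℂ) (harmE x0 s α ω) := by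
  have hsub : Set.uIcc x0 t ⊆ Set.uIcc x0 x1 := by
    rw [Set.uIcc_of_le ht.1, Set.uIcc_of_le (ht.1.trans ht.2)]
    exact Set.Icc_subset_Icc_right ht.2
  have hαt : IntervalIntegrable α volume x0 t := hα.mono_set hsub
  have h := intervalIntegral.hasSum_integral_of_dominated_convergence (μ := volume)
    (a := x0) (b := t)
    (F := fun j s => hexpK x0 α ω s * (starRingEnd ℂ) (Aiter x0 α ω j s))
    (f := fun s => hexpK x0 α ω s * (starRingEnd ℂ) (harmE x0 s α ω))
    (fun j s => |α s| * ((∫ v in x0..x1, |α v|) ^ j / (j.factorial : ℝ)))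
    (fun j => ((hexpK_int hαt ω).mul_continuousOn
        (hexp_conj_cont (hexp_cont hαt ω j))).def'.aestronglyMeasurable)
    (fun j => Filter.Eventually.of_forall fun s hs => by
      rw [Set.uIoc_of_le ht.1] at hs
      rw [norm_mul, hexpK_norm, RCLike.norm_conj]
      exact mul_le_mul_of_nonneg_left (hexp_bound' hα ω j s ⟨hs.1.le, hs.2.trans ht.2⟩)
        (abs_nonneg _))
    (Filter.Eventually.of_forall fun s _ =>
      (Real.summable_pow_div_factorial _).mul_left _)
    (by
      simp only [tsum_mul_left]
      exact hαt.abs.mul_const _)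
    (Filter.Eventually.of_forall fun s hs => by
      rw [Set.uIoc_of_le ht.1] at hs
      have h1 := (hexp_summable hα ω (t := s) ⟨hs.1.le, hs.2.trans ht.2⟩).hasSum
      exact ((Complex.hasSum_conj'.2 h1).mul_left _))
  rw [harmE, (hexp_summable hα ω ht).tsum_eq_zero_add]
  congr 1
  exact h.tsum_eq

lemma hexp_ac_re {f : ℝ → ℂ} {a b : ℝ} (hf : IntervalIntegrable f volume a b) :
    AbsolutelyContinuousOnInterval (fun x => (1 + ∫ s in a..x, f s).re) a b := by
  have hr : IntervalIntegrable (fun s => (f s).re) volume a b := ⟨hf.1.re, hf.2.re⟩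
  have h := hr.absolutelyContinuousOnInterval_intervalIntegral (c := a) (by simp)
  have hc : AbsolutelyContinuousOnInterval (fun _ : ℝ => (1 : ℂ).re) a b :=
    (LipschitzWith.const _).lipschitzOnWith.absolutelyContinuousOnInterval
  have h2 := hc.add h
  have key : ∀ x ∈ Set.uIcc a b, (∫ s in a..x, (f s).re) = (∫ s in a..x, f s).re := by
    intro x hx
    exact Complex.reCLM.intervalIntegral_comp_comm
      (hf.mono_set (Set.uIcc_subset_uIcc_left hx))
  refine hexp_ac_congr h2 fun x hx => ?_
  simp only [Pi.add_apply, Complex.add_re, key x hx]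

lemma hexp_ac_im {f : ℝ → ℂ} {a b : ℝ} (hf : IntervalIntegrable f volume a b) :
    AbsolutelyContinuousOnInterval (fun x => (1 + ∫ s in a..x, f s).im) a b := by
  have hr : IntervalIntegrable (fun s => (f s).im) volume a b := ⟨hf.1.im, hf.2.im⟩
  have h := hr.absolutelyContinuousOnInterval_intervalIntegral (c := a) (by simp)
  have hc : AbsolutelyContinuousOnInterval (fun _ : ℝ => (1 : ℂ).im) a b :=
    (LipschitzWith.const _).lipschitzOnWith.absolutelyContinuousOnInterval
  have h2 := hc.add h
  have key : ∀ x ∈ Set.uIcc a b, (∫ s in a..x, (f s).im) = (∫ s in a..x, f s).im := by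
    intro x hx
    exact Complex.imCLM.intervalIntegral_comp_comm
      (hf.mono_set (Set.uIcc_subset_uIcc_left hx))
  refine hexp_ac_congr h2 fun x hx => ?_
  simp only [Pi.add_apply, Complex.add_im, key x hx]

lemma hexp_wronski {x0 x1 : ℝ} (hx : x0 ≤ x1) {α : ℝ → ℝ}
    (hα : IntervalIntegrable α volume x0 x1) (ω : ℝ) :
    (harmE x0 x1 α ω).re * (harmE x0 x1 (fun s => -α s) ω).re
      + (harmE x0 x1 α ω).im * (harmE x0 x1 (fun s => -α s) ω).im = 1 := by
  have hβ : IntervalIntegrable (fun s => -α s) volume x0 x1 := hα.neg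
  set f : ℝ → ℂ := fun s => hexpK x0 α ω s * (starRingEnd ℂ) (harmE x0 s α ω) with hf
  set g : ℝ → ℂ := fun s => hexpK x0 (fun s => -α s) ω s *
    (starRingEnd ℂ) (harmE x0 s (fun s => -α s) ω) with hg
  have hfi : IntervalIntegrable f volume x0 x1 :=
    (hexpK_int hα ω).mul_continuousOn (hexp_conj_cont (hexp_E_cont hx hα ω))
  have hgi : IntervalIntegrable g volume x0 x1 :=
    (hexpK_int hβ ω).mul_continuousOn (hexp_conj_cont (hexp_E_cont hx hβ ω))
  have hac := ((hexp_ac_re hfi).mul (hexp_ac_re hgi)).add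
    ((hexp_ac_im hfi).mul (hexp_ac_im hgi))
  obtain ⟨C, hC⟩ := hac.const_of_ae_hasDerivAt_zero (by
    filter_upwards [hfi.ae_hasDerivAt_integral, hgi.ae_hasDerivAt_integral] with t h1 h2 ht
    have d1 := (h1 ht x0 (by simp)).const_add 1
    have d2 := (h2 ht x0 (by simp)).const_add 1
    have r1 := Complex.reCLM.hasFDerivAt.comp_hasDerivAt t d1
    have r2 := Complex.reCLM.hasFDerivAt.comp_hasDerivAt t d2
    have i1 := Complex.imCLM.hasFDerivAt.comp_hasDerivAt t d1
    have i2 := Complex.imCLM.hasFDerivAt.comp_hasDerivAt t d2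
    have d := (r1.mul r2).add (i1.mul i2)
    rw [Set.uIcc_of_le hx] at ht
    convert! d using 1
    simp only [Function.comp_apply, Complex.reCLM_apply, Complex.imCLM_apply]
    rw [← hexp_eq hα ω ht, ← hexp_eq hβ ω ht]
    have hk : hexpK x0 (fun s => -α s) ω t = - hexpK x0 α ω t := by
      simp [hexpK]
    simp only [hf, hg, hk, Complex.mul_re, Complex.mul_im, Complex.conj_re, Complex.conj_im,
      Complex.neg_re, Complex.neg_im]
    ring)
  have e0 := hC x0 (by simp)
  have e1 := hC x1 (by simp)
  rw [← e0] at e1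
  simp only [Pi.add_apply, Pi.mul_apply] at e1
  rw [← hexp_eq hα ω ⟨hx, le_rfl⟩, ← hexp_eq hβ ω ⟨hx, le_rfl⟩] at e1
  simpa using e1

/-- Proposition (prop-E-bound-from-zero): each of `E_α`, `E_{−α}` and `E_α + E_{−α}`
is bounded below in modulus by `e^{−‖α‖}` on the real line. -/
theorem harmonic_exponential_lower_bound
    (x0 x1 : ℝ) (hx : x0 < x1)
    (α : ℝ → ℝ) (hα : IntegrableOn α (Set.Ioo x0 x1))
    (N : ℝ) (hN : N = ∫ x in x0..x1, |α x|) :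
    ∀ ω : ℝ,
      Real.exp (-N) ≤ ‖harmE x0 x1 α (ω : ℂ)‖ ∧
      Real.exp (-N) ≤ ‖harmE x0 x1 (fun s => -α s) (ω : ℂ)‖ ∧
      Real.exp (-N) ≤ ‖harmE x0 x1 α (ω : ℂ) + harmE x0 x1 (fun s => -α s) (ω : ℂ)‖ := by
  intro ω
  have hα' : IntervalIntegrable α volume x0 x1 := by
    rw [intervalIntegrable_iff_integrableOn_Ioo_of_le hx.le]; exact hα
  have hw := hexp_wronski hx.le hα' ω
  have u1 := hexp_upper hx.le hα' ω
  have u2 := hexp_upper hx.le (α := fun s => -α s) hα'.neg ω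
  simp only [abs_neg] at u2
  rw [← hN] at u1 u2
  have hN0 : 0 ≤ N := hN ▸ intervalIntegral.integral_nonneg hx.le fun _ _ => abs_nonneg _
  generalize harmE x0 x1 α ω = E at *
  generalize harmE x0 x1 (fun s => -α s) ω = G at *
  have hEG : 1 ≤ ‖E‖ * ‖G‖ := by
    have h1 : (E * (starRingEnd ℂ) G).re = 1 := by
      simp only [Complex.mul_re, Complex.conj_re, Complex.conj_im]; linarith
    have h2 := Complex.re_le_norm (E * (starRingEnd ℂ) G)
    rwa [h1, norm_mul, RCLike.norm_conj] at h2
  have hpos := Real.exp_pos N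
  have he : Real.exp (-N) * Real.exp N = 1 := by rw [← Real.exp_add]; simp
  refine ⟨?_, ?_, ?_⟩
  · have : 1 ≤ ‖E‖ * Real.exp N :=
      hEG.trans (mul_le_mul_of_nonneg_left u2 (norm_nonneg _))
    exact le_of_mul_le_mul_right (by linarith) hpos
  · have : 1 ≤ ‖G‖ * Real.exp N := by
      rw [mul_comm] at hEG
      exact hEG.trans (mul_le_mul_of_nonneg_left u1 (norm_nonneg _))
    exact le_of_mul_le_mul_right (by linarith) hpos
  · have h1 : Real.exp (-N) ≤ 1 := by simpa using hN0
    refine h1.trans ?_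
    have h2 : ‖E + G‖ ^ 2 = (E.re + G.re) ^ 2 + (E.im + G.im) ^ 2 := by
      rw [← Complex.normSq_eq_norm_sq, Complex.normSq_apply]; simp; ring
    nlinarith [norm_nonneg (E + G), sq_nonneg E.re, sq_nonneg G.re, sq_nonneg E.im,
      sq_nonneg G.im]
end

section
/- Fix real numbers x0 < x1 and y ∈ (x0, x1], and let α : ℝ → ℝ be Lebesgue integrable on (x0, x1). Then for every ω ∈ ℝ, Re( E_α^{(x0,y)}(ω) · conj( E_{−α}^{(x0,y)}(ω) ) ) = 1. -/
open MeasureTheory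

section EnergyAux
open Set

lemma aux_pow_ac {G : ℝ → ℝ} {a b : ℝ} (h : AbsolutelyContinuousOnInterval G a b) (n : ℕ) :
    AbsolutelyContinuousOnInterval (fun t => G t ^ (n + 1)) a b := by
  induction n with
  | zero => simpa using h
  | succ n ih =>
    simp_rw [pow_succ _ (n + 1)]
    exact ih.fun_mul h

lemma aux_pow_integral {g : ℝ → ℝ} {a b : ℝ} (hg : IntervalIntegrable g volume a b) (n : ℕ) :
    ∫ s in a..b, g s * (∫ r in a..s, g r) ^ n = (∫ r in a..b, g r) ^ (n + 1) / (n + 1) := by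
  have hac := hg.absolutelyContinuousOnInterval_intervalIntegral (c := a) (by simp)
  have h1 := (aux_pow_ac hac n).integral_deriv_eq_sub
  have h2 : ∫ s in a..b, deriv (fun t => (∫ r in a..t, g r) ^ (n + 1)) s
      = ∫ s in a..b, ((n : ℝ) + 1) * (g s * (∫ r in a..s, g r) ^ n) := by
    apply intervalIntegral.integral_congr_ae
    filter_upwards [hg.ae_hasDerivAt_integral] with x hx hx'
    have := (hx (uIoc_subset_uIcc hx') a (by simp)).fun_pow (n + 1)
    rw [this.deriv]
    push_cast
    ring
  rw [h2, intervalIntegral.integral_const_mul] at h1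
  have : (n : ℝ) + 1 ≠ 0 := by positivity
  rw [eq_div_iff this, mul_comm, h1]
  simp

lemma aux_series (x0 y : ℝ) (hy : x0 ≤ y) (k : ℝ → ℂ) (hk : IntervalIntegrable k volume x0 y)
    (A : ℕ → ℝ → ℂ) (h0 : ∀ t, A 0 t = 1)
    (hs : ∀ j t, A (j + 1) t = ∫ s in x0..t, k s * (starRingEnd ℂ) (A j s)) :
    ContinuousOn (fun t => ∑' j, A j t) (Icc x0 y) ∧
    ∀ t ∈ Icc x0 y, ∑' j, A j t = 1 + ∫ s in x0..t, k s * (starRingEnd ℂ) (∑' j, A j s) := by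
  have hkt : ∀ t ∈ Icc x0 y, IntervalIntegrable k volume x0 t := fun t ht =>
    hk.mono_set (by rw [uIcc_of_le hy, uIcc_of_le ht.1]; exact Icc_subset_Icc_right ht.2)
  have hcont : ∀ j, ContinuousOn (A j) (Icc x0 y) := by
    intro j
    induction j with
    | zero => exact continuousOn_const.congr (fun t _ => h0 t)
    | succ j ih =>
      have hi : IntervalIntegrable (fun s => k s * (starRingEnd ℂ) (A j s)) volume x0 y :=
        hk.mul_continuousOn (by
          rw [uIcc_of_le hy]
          exact Complex.continuous_conj.comp_continuousOn ih)
      have := intervalIntegral.continuousOn_primitive_interval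
        (μ := volume) (f := fun s => k s * (starRingEnd ℂ) (A j s)) (a := x0) (b := y)
        (by rw [uIcc_of_le hy, integrableOn_Icc_iff_integrableOn_Ioc]
            exact (intervalIntegrable_iff_integrableOn_Ioc_of_le hy).1 hi)
      rw [uIcc_of_le hy] at this
      exact this.congr (fun t _ => hs j t)
  have hbd : ∀ j, ∀ t ∈ Icc x0 y, ‖A j t‖ ≤ (∫ s in x0..t, ‖k s‖) ^ j / (j.factorial : ℝ) := by
    intro j
    induction j with
    | zero => intro t _; simp [h0]
    | succ j ih =>
      intro t ht
      have hkn := (hkt t ht).norm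
      rw [hs]
      have hac := hkn.absolutelyContinuousOnInterval_intervalIntegral (c := x0) (by simp)
      calc _ ≤ ∫ s in x0..t, ‖k s‖ * (∫ r in x0..s, ‖k r‖) ^ j * (j.factorial : ℝ)⁻¹ := by
            apply intervalIntegral.norm_integral_le_of_norm_le ht.1
            · refine Filter.Eventually.of_forall fun s hs' => ?_
              rw [norm_mul, RCLike.norm_conj, mul_assoc]
              gcongr
              exact ih s ⟨hs'.1.le, hs'.2.trans ht.2⟩
            · exact (hkn.mul_continuousOn (hac.continuousOn.pow j)).mul_const _
        _ = _ := by
            rw [intervalIntegral.integral_mul_const, aux_pow_integral hkn, Nat.factorial_succ]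
            push_cast
            field_simp
  set M := ∫ s in x0..y, ‖k s‖ with hM
  have hbd' : ∀ j, ∀ t ∈ Icc x0 y, ‖A j t‖ ≤ M ^ j / (j.factorial : ℝ) := by
    intro j t ht
    refine (hbd j t ht).trans ?_
    have h0' : 0 ≤ ∫ s in x0..t, ‖k s‖ :=
      intervalIntegral.integral_nonneg ht.1 fun _ _ => norm_nonneg _
    gcongr
    apply intervalIntegral.integral_mono_interval le_rfl ht.1 ht.2 _ hk.norm
    exact Filter.Eventually.of_forall fun _ => norm_nonneg _
  have hsum : Summable fun j : ℕ => M ^ j / (j.factorial : ℝ) := Real.summable_pow_div_factorial M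
  have hsA : ∀ t ∈ Icc x0 y, Summable fun j => A j t := fun t ht =>
    Summable.of_norm_bounded hsum (fun j => hbd' j t ht)
  refine ⟨continuousOn_tsum hcont hsum hbd', fun t ht => ?_⟩
  rw [(hsA t ht).tsum_eq_zero_add, h0]
  congr 1
  simp_rw [hs]
  refine HasSum.tsum_eq ?_
  have hsub : ∀ s ∈ Set.uIoc x0 t, s ∈ Icc x0 y := by
    intro s hs'
    rw [uIoc_of_le ht.1] at hs'
    exact ⟨hs'.1.le, hs'.2.trans ht.2⟩
  apply intervalIntegral.hasSum_integral_of_dominated_convergence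
    (fun j s => ‖k s‖ * (M ^ j / (j.factorial : ℝ)))
  · intro j
    have hi : IntervalIntegrable (fun s => k s * (starRingEnd ℂ) (A j s)) volume x0 t :=
      (hkt t ht).mul_continuousOn (by
          rw [uIcc_of_le ht.1]
          exact (Complex.continuous_conj.comp_continuousOn (hcont j)).mono
            (Icc_subset_Icc_right ht.2))
    exact hi.aestronglyMeasurable_restrict_uIoc
  · intro j
    refine Filter.Eventually.of_forall fun s hs' => ?_
    rw [norm_mul, RCLike.norm_conj]
    gcongr
    exact hbd' j s (hsub s hs')
  · exact Filter.Eventually.of_forall fun s _ => hsum.mul_left _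
  · simp_rw [tsum_mul_left]
    exact (hkt t ht).norm.mul_const _
  · refine Filter.Eventually.of_forall fun s hs' => ?_
    exact ((Complex.hasSum_conj'.2 (hsA s (hsub s hs')).hasSum)).mul_left _

lemma aux_energy (x0 y : ℝ) (hy : x0 ≤ y) (k : ℝ → ℂ) (hk : IntervalIntegrable k volume x0 y)
    (P Q : ℝ → ℂ) (hP : ContinuousOn P (Icc x0 y)) (hQ : ContinuousOn Q (Icc x0 y))
    (hP' : ∀ t ∈ Icc x0 y, P t = 1 + ∫ s in x0..t, k s * (starRingEnd ℂ) (P s))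
    (hQ' : ∀ t ∈ Icc x0 y, Q t = 1 + ∫ s in x0..t, -k s * (starRingEnd ℂ) (Q s)) :
    (P y * (starRingEnd ℂ) (Q y)).re = 1 := by
  set u := fun s => k s * (starRingEnd ℂ) (P s) with hu
  set v := fun s => -k s * (starRingEnd ℂ) (Q s) with hv
  have hui : IntervalIntegrable u volume x0 y := hk.mul_continuousOn (by
    rw [uIcc_of_le hy]; exact Complex.continuous_conj.comp_continuousOn hP)
  have hvi : IntervalIntegrable v volume x0 y := hk.neg.mul_continuousOn (by
    rw [uIcc_of_le hy]; exact Complex.continuous_conj.comp_continuousOn hQ)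
  have key : ∀ w : ℝ → ℂ, IntervalIntegrable w volume x0 y →
      IntervalIntegrable (fun s => (w s).re) volume x0 y ∧
      IntervalIntegrable (fun s => (w s).im) volume x0 y ∧
      ∀ t ∈ Icc x0 y, (∫ s in x0..t, w s).re = ∫ s in x0..t, (w s).re ∧
        (∫ s in x0..t, w s).im = ∫ s in x0..t, (w s).im := by
    intro w hw
    refine ⟨⟨hw.1.re, hw.2.re⟩, ⟨hw.1.im, hw.2.im⟩, fun t ht => ?_⟩
    have hwt : IntervalIntegrable w volume x0 t :=
      hw.mono_set (by rw [uIcc_of_le hy, uIcc_of_le ht.1]; exact Icc_subset_Icc_right ht.2)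
    exact ⟨(Complex.reCLM.intervalIntegral_comp_comm hwt).symm,
      (Complex.imCLM.intervalIntegral_comp_comm hwt).symm⟩
  obtain ⟨ur, ui, ue⟩ := key u hui
  obtain ⟨vr, vi, ve⟩ := key v hvi
  have ac := ur.absolutelyContinuousOnInterval_intervalIntegral (c := x0) (by simp)
  have bc := ui.absolutelyContinuousOnInterval_intervalIntegral (c := x0) (by simp)
  have cc := vr.absolutelyContinuousOnInterval_intervalIntegral (c := x0) (by simp)
  have dc := vi.absolutelyContinuousOnInterval_intervalIntegral (c := x0) (by simp)
  have hf := ((ac.fun_add cc).fun_add (ac.fun_mul cc)).fun_add (bc.fun_mul dc)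
  obtain ⟨C, hC⟩ := hf.const_of_ae_hasDerivAt_zero (by
    filter_upwards [ur.ae_hasDerivAt_integral, ui.ae_hasDerivAt_integral,
      vr.ae_hasDerivAt_integral, vi.ae_hasDerivAt_integral] with x h1 h2 h3 h4 hx
    have d1 := h1 hx x0 (by simp)
    have d2 := h2 hx x0 (by simp)
    have d3 := h3 hx x0 (by simp)
    have d4 := h4 hx x0 (by simp)
    have hx' : x ∈ Icc x0 y := by rwa [uIcc_of_le hy] at hx
    have e1 := (ue x hx').1
    have e2 := (ue x hx').2
    have e3 := (ve x hx').1
    have e4 := (ve x hx').2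
    have p := hP' x hx'
    have q := hQ' x hx'
    have p1 := congrArg Complex.re p
    have p2 := congrArg Complex.im p
    have q1 := congrArg Complex.re q
    have q2 := congrArg Complex.im q
    simp only [Complex.add_re, Complex.add_im, Complex.one_re, Complex.one_im, zero_add] at p1 p2 q1 q2
    rw [e1] at p1
    rw [e2] at p2
    rw [e3] at q1
    rw [e4] at q2
    refine (((d1.fun_add d3).fun_add (d1.fun_mul d3)).fun_add (d2.fun_mul d4)).congr_deriv ?_
    have a1 : ∫ s in x0..x, (u s).re = (P x).re - 1 := by linarith
    have a2 : ∫ s in x0..x, (v s).re = (Q x).re - 1 := by linarith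
    rw [a1, a2, ← p2, ← q2]
    simp only [hu, hv, Complex.mul_re, Complex.mul_im, Complex.neg_re, Complex.neg_im,
      Complex.conj_re, Complex.conj_im]
    ring)
  have c1 := hC x0 (by simp)
  have c2 := hC y (by simp)
  have hyy : y ∈ Icc x0 y := ⟨hy, le_rfl⟩
  have e1 := (ue y hyy).1
  have e2 := (ue y hyy).2
  have e3 := (ve y hyy).1
  have e4 := (ve y hyy).2
  rw [hP' y hyy, hQ' y hyy]
  simp only [Complex.mul_re, Complex.conj_re, Complex.conj_im, Complex.add_re, Complex.add_im,
    Complex.one_re, Complex.one_im]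
  rw [e1, e2, e3, e4]
  simp only [intervalIntegral.integral_same] at c1
  linarith

end EnergyAux

/-- Proposition (prop-preliminary-approximation-application)(i):
`Re(E_α^{(x0,y)}(ω) · conj(E_{−α}^{(x0,y)}(ω))) = 1` for every real `ω`. -/
theorem harmonic_exponential_energy_identity
    (x0 x1 y : ℝ) (hx : x0 < x1) (hy : y ∈ Set.Ioc x0 x1)
    (α : ℝ → ℝ) (hα : IntegrableOn α (Set.Ioo x0 x1)) :
    ∀ ω : ℝ,
      (harmE x0 y α (ω : ℂ) * (starRingEnd ℂ) (harmE x0 y (fun s => -α s) (ω : ℂ))).re = 1 := by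
  intro ω
  have hle : x0 ≤ y := hy.1.le
  have hαi : IntervalIntegrable α volume x0 y := by
    rw [intervalIntegrable_iff_integrableOn_Ioo_of_le hle]
    exact hα.mono_set (Set.Ioo_subset_Ioo_right hy.2)
  have hαc : IntervalIntegrable (fun s => (α s : ℂ)) volume x0 y := ⟨hαi.1.ofReal, hαi.2.ofReal⟩
  have hk : IntervalIntegrable (fun s : ℝ => (α s : ℂ) *
      Complex.exp (2 * Complex.I * ((s : ℂ) - (x0 : ℂ)) * (ω : ℂ))) volume x0 y :=
    hαc.mul_continuousOn (by fun_prop)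
  have hP := aux_series x0 y hle _ hk (Aiter x0 α ω) (fun _ => rfl) (fun _ _ => rfl)
  have hQ := aux_series x0 y hle _ hk.neg (Aiter x0 (fun s => -α s) ω) (fun _ => rfl)
    (fun j t => by
      simp only [Aiter, Pi.neg_apply, Complex.ofReal_neg, neg_mul])
  exact aux_energy x0 y hle _ hk _ _ hP.1 hQ.1 hP.2 hQ.2
end

section
/- Fix real numbers x0 < x1 and y ∈ (x0, x1], and let α : ℝ → ℝ be Lebesgue integrable on (x0, x1). Then for every ω ∈ ℝ, the denominator E_α^{(x0,y)}(ω) + E_{−α}^{(x0,y)}(ω) is nonzero and | Th_α^{(x0,y)}(ω) | ≤ tanh( ∫_{x0}^{y} |α| ). -/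
open MeasureTheory

open Set in
lemma ht_ac_pow {M : ℝ → ℝ} {a b : ℝ} (hM : AbsolutelyContinuousOnInterval M a b) (n : ℕ) :
    AbsolutelyContinuousOnInterval (fun t => M t ^ (n + 1)) a b := by
  induction n with
  | zero => simpa using hM
  | succ n ih =>
    have := ih.fun_mul hM
    simpa [pow_succ] using this

open Set in
/-- `∫ m Mⁿ/n! = Mⁿ⁺¹/(n+1)!` for `M` the primitive of `m`. -/
lemma ht_pow_integral {m : ℝ → ℝ} {a b : ℝ} (hm : IntervalIntegrable m volume a b) (n : ℕ) :
    ∫ s in a..b, m s * ((∫ u in a..s, m u) ^ n / (n.factorial : ℝ))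
      = (∫ u in a..b, m u) ^ (n + 1) / ((n + 1).factorial : ℝ) := by
  have hac := ht_ac_pow
    (hm.absolutelyContinuousOnInterval_intervalIntegral (c := a) left_mem_uIcc) n
  have h1 := hac.integral_deriv_eq_sub
  have h2 : ∫ s in a..b, deriv (fun t => (∫ u in a..t, m u) ^ (n + 1)) s
      = ∫ s in a..b, ((n + 1).factorial : ℝ) *
        (m s * ((∫ u in a..s, m u) ^ n / (n.factorial : ℝ))) := by
    apply intervalIntegral.integral_congr_ae
    filter_upwards [hm.ae_hasDerivAt_integral] with x hx hx'
    have := ((hx (uIoc_subset_uIcc hx') a left_mem_uIcc).pow (n + 1)).deriv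
    have e : deriv (fun t => (∫ u in a..t, m u) ^ (n + 1)) x = _ := this
    rw [e, Nat.factorial_succ]
    have : (n.factorial : ℝ) ≠ 0 := by positivity
    push_cast
    field_simp
  rw [h2, intervalIntegral.integral_const_mul] at h1
  have : ((n + 1).factorial : ℝ) ≠ 0 := by positivity
  simp only [intervalIntegral.integral_same] at h1
  rw [eq_div_iff this, mul_comm, h1]
  simp

open Set in
/-- Continuity and bound of the iterates. -/
lemma ht_iter {g : ℝ → ℂ} {B : ℕ → ℝ → ℂ} {a b : ℝ} (hab : a ≤ b)
    (hg : IntervalIntegrable g volume a b) (h0 : ∀ t, B 0 t = 1)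
    (hs : ∀ j t, B (j + 1) t = ∫ s in a..t, g s * (starRingEnd ℂ) (B j s)) (j : ℕ) :
    ContinuousOn (B j) (Icc a b) ∧
      ∀ t ∈ Icc a b, ‖B j t‖ ≤ (∫ s in a..t, ‖g s‖) ^ j / (j.factorial : ℝ) := by
  induction j with
  | zero =>
    have : B 0 = fun _ => 1 := funext h0
    rw [this]
    exact ⟨continuousOn_const, by simp⟩
  | succ j ih =>
    obtain ⟨ihc, ihb⟩ := ih
    have hint : IntervalIntegrable (fun s => g s * (starRingEnd ℂ) (B j s)) volume a b := by
      apply hg.mul_continuousOn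
      rw [uIcc_of_le hab]
      exact Complex.continuous_conj.comp_continuousOn ihc
    have e : B (j + 1) = fun t => ∫ s in a..t, g s * (starRingEnd ℂ) (B j s) := funext (hs j)
    constructor
    · rw [e, ← uIcc_of_le hab]
      exact intervalIntegral.continuousOn_primitive_interval' hint left_mem_uIcc
    · intro t ht
      have hgt : IntervalIntegrable g volume a t :=
        hg.mono_set (by rw [uIcc_of_le hab, uIcc_of_le ht.1]; exact Icc_subset_Icc_right ht.2)
      have hMc : ContinuousOn (fun s => ∫ u in a..s, ‖g u‖) (uIcc a t) :=
        intervalIntegral.continuousOn_primitive_interval' hgt.norm left_mem_uIcc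
      rw [hs, ← ht_pow_integral hgt.norm j]
      apply intervalIntegral.norm_integral_le_of_norm_le ht.1
      · refine Filter.Eventually.of_forall fun s hsm => ?_
        rw [norm_mul, RCLike.norm_conj]
        exact mul_le_mul_of_nonneg_left (ihb s ⟨hsm.1.le, hsm.2.trans ht.2⟩) (norm_nonneg _)
      · exact hgt.norm.mul_continuousOn ((hMc.pow j).div_const _)

open Set in
/-- Conservation law. -/
lemma ht_conserve {g C S : ℝ → ℂ} {a b : ℝ} (hab : a ≤ b)
    (hg : IntervalIntegrable g volume a b)
    (hCc : ContinuousOn C (Icc a b)) (hSc : ContinuousOn S (Icc a b))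
    (hC : ∀ t ∈ Icc a b, C t = 1 + ∫ s in a..t, g s * (starRingEnd ℂ) (S s))
    (hS : ∀ t ∈ Icc a b, S t = ∫ s in a..t, g s * (starRingEnd ℂ) (C s)) :
    ‖C b‖ ^ 2 = 1 + ‖S b‖ ^ 2 := by
  rw [← uIcc_of_le hab] at *
  have key : ∀ F : ℝ → ℂ, ContinuousOn F (uIcc a b) →
      IntervalIntegrable (fun s => g s * (starRingEnd ℂ) (F s)) volume a b := fun F hF =>
    hg.mul_continuousOn (Complex.continuous_conj.comp_continuousOn hF)
  have hgS := key S hSc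
  have hgC := key C hCc
  have hre : ∀ f : ℝ → ℂ, IntervalIntegrable f volume a b →
      IntervalIntegrable (fun s => (f s).re) volume a b := fun f hf => ⟨hf.1.re, hf.2.re⟩
  have him : ∀ f : ℝ → ℂ, IntervalIntegrable f volume a b →
      IntervalIntegrable (fun s => (f s).im) volume a b := fun f hf => ⟨hf.1.im, hf.2.im⟩
  have hsub : ∀ f : ℝ → ℂ, IntervalIntegrable f volume a b → ∀ t ∈ uIcc a b,
      (∫ s in a..t, f s).re = ∫ s in a..t, (f s).re ∧
      (∫ s in a..t, f s).im = ∫ s in a..t, (f s).im := by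
    intro f hf t ht
    have hft : IntervalIntegrable f volume a t :=
      hf.mono_set (uIcc_subset_uIcc_left ht)
    exact ⟨(Complex.reCLM.intervalIntegral_comp_comm hft).symm,
      (Complex.imCLM.intervalIntegral_comp_comm hft).symm⟩
  set f1 : ℝ → ℝ := fun s => (g s * (starRingEnd ℂ) (S s)).re with hf1
  set f2 : ℝ → ℝ := fun s => (g s * (starRingEnd ℂ) (S s)).im with hf2
  set f3 : ℝ → ℝ := fun s => (g s * (starRingEnd ℂ) (C s)).re with hf3
  set f4 : ℝ → ℝ := fun s => (g s * (starRingEnd ℂ) (C s)).im with hf4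
  have i1 : IntervalIntegrable f1 volume a b := hre _ hgS
  have i2 : IntervalIntegrable f2 volume a b := him _ hgS
  have i3 : IntervalIntegrable f3 volume a b := hre _ hgC
  have i4 : IntervalIntegrable f4 volume a b := him _ hgC
  have a1 := i1.absolutelyContinuousOnInterval_intervalIntegral (c := a) left_mem_uIcc
  have a2 := i2.absolutelyContinuousOnInterval_intervalIntegral (c := a) left_mem_uIcc
  have a3 := i3.absolutelyContinuousOnInterval_intervalIntegral (c := a) left_mem_uIcc
  have a4 := i4.absolutelyContinuousOnInterval_intervalIntegral (c := a) left_mem_uIcc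
  have c1 : ∀ t ∈ uIcc a b, (C t).re = 1 + ∫ s in a..t, f1 s := fun t ht => by
    rw [hC t ht, Complex.add_re, (hsub _ hgS t ht).1]; simp [hf1]
  have c2 : ∀ t ∈ uIcc a b, (C t).im = ∫ s in a..t, f2 s := fun t ht => by
    rw [hC t ht, Complex.add_im, (hsub _ hgS t ht).2]; simp [hf2]
  have c3 : ∀ t ∈ uIcc a b, (S t).re = ∫ s in a..t, f3 s := fun t ht => by
    rw [hS t ht, (hsub _ hgC t ht).1]
  have c4 : ∀ t ∈ uIcc a b, (S t).im = ∫ s in a..t, f4 s := fun t ht => by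
    rw [hS t ht, (hsub _ hgC t ht).2]
  have hAC := (((a1.fun_add a1).fun_add (a1.fun_mul a1)).fun_add (a2.fun_mul a2)).fun_sub
    ((a3.fun_mul a3).fun_add (a4.fun_mul a4))
  obtain ⟨K, hK⟩ := hAC.const_of_ae_hasDerivAt_zero (by
    filter_upwards [i1.ae_hasDerivAt_integral, i2.ae_hasDerivAt_integral,
      i3.ae_hasDerivAt_integral, i4.ae_hasDerivAt_integral] with x h1 h2 h3 h4 hx
    have d1 := h1 hx a left_mem_uIcc
    have d2 := h2 hx a left_mem_uIcc
    have d3 := h3 hx a left_mem_uIcc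
    have d4 := h4 hx a left_mem_uIcc
    have d := (((d1.fun_add d1).fun_add (d1.fun_mul d1)).fun_add (d2.fun_mul d2)).fun_sub
      ((d3.fun_mul d3).fun_add (d4.fun_mul d4))
    convert! d using 1
    have e1 : (∫ s in a..x, f1 s) = (C x).re - 1 := by rw [c1 x hx]; ring
    rw [e1, ← c2 x hx, ← c3 x hx, ← c4 x hx]
    simp only [hf1, hf2, hf3, hf4, Complex.mul_re, Complex.mul_im, Complex.conj_re,
      Complex.conj_im]
    ring)
  have k1 := hK a left_mem_uIcc
  have k2 := hK b right_mem_uIcc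
  simp only [intervalIntegral.integral_same] at k1
  rw [← c2 b right_mem_uIcc, ← c3 b right_mem_uIcc, ← c4 b right_mem_uIcc] at k2
  have e1 : (∫ s in a..b, f1 s) = (C b).re - 1 := by rw [c1 b right_mem_uIcc]; ring
  rw [e1] at k2
  rw [Complex.sq_norm, Complex.sq_norm, Complex.normSq_apply, Complex.normSq_apply]
  linarith

open Set in
lemma ht_tsum {g : ℝ → ℂ} {D : ℕ → ℝ → ℂ} {u : ℕ → ℝ} {a b : ℝ} (hab : a ≤ b)
    (hg : IntervalIntegrable g volume a b) (hc : ∀ n, ContinuousOn (D n) (Icc a b))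
    (hu : Summable u) (hb : ∀ n, ∀ t ∈ Icc a b, ‖D n t‖ ≤ u n) (t : ℝ) (ht : t ∈ Icc a b) :
    HasSum (fun n => ∫ s in a..t, g s * (starRingEnd ℂ) (D n s))
      (∫ s in a..t, g s * (starRingEnd ℂ) (∑' n, D n s)) := by
  have hsub : uIcc a t ⊆ Icc a b := by
    rw [uIcc_of_le ht.1]; exact Icc_subset_Icc_right ht.2
  have hgt : IntervalIntegrable g volume a t :=
    hg.mono_set (by rw [uIcc_of_le hab]; exact hsub)
  apply intervalIntegral.hasSum_integral_of_dominated_convergence (fun n s => ‖g s‖ * u n)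
  · intro n
    have : IntervalIntegrable (fun s => g s * (starRingEnd ℂ) (D n s)) volume a t :=
      hgt.mul_continuousOn (Complex.continuous_conj.comp_continuousOn ((hc n).mono hsub))
    exact (intervalIntegrable_iff.mp this).aestronglyMeasurable
  · intro n
    refine Filter.Eventually.of_forall fun s hs => ?_
    rw [norm_mul, RCLike.norm_conj]
    exact mul_le_mul_of_nonneg_left (hb n s (hsub (uIoc_subset_uIcc hs))) (norm_nonneg _)
  · exact Filter.Eventually.of_forall fun s hs => hu.mul_left _
  · simp_rw [tsum_mul_left]
    exact hgt.norm.mul_const _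
  · refine Filter.Eventually.of_forall fun s hs => ?_
    have hsum : Summable (fun n => D n s) :=
      Summable.of_norm_bounded hu (fun n => hb n s (hsub (uIoc_subset_uIcc hs)))
    exact ((Complex.hasSum_conj'.mpr (by simpa using hsum.hasSum))).mul_left _

open Set in
lemma ht_abstract {g : ℝ → ℂ} {B : ℕ → ℝ → ℂ} {a b : ℝ} (hab : a ≤ b)
    (hg : IntervalIntegrable g volume a b) (h0 : ∀ t, B 0 t = 1)
    (hs : ∀ j t, B (j + 1) t = ∫ s in a..t, g s * (starRingEnd ℂ) (B j s)) :
    Summable (fun j => B (2 * j) b) ∧ Summable (fun j => B (2 * j + 1) b) ∧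
    ‖∑' j, B (2 * j) b‖ ^ 2 = 1 + ‖∑' j, B (2 * j + 1) b‖ ^ 2 ∧
    ‖∑' j, B (2 * j + 1) b‖ ≤ Real.sinh (∫ s in a..b, ‖g s‖) := by
  set L := ∫ s in a..b, ‖g s‖ with hL
  have hit := ht_iter hab hg h0 hs
  have hbd : ∀ j, ∀ t ∈ Icc a b, ‖B j t‖ ≤ L ^ j / (j.factorial : ℝ) := by
    intro j t ht
    refine ((hit j).2 t ht).trans ?_
    have hn : 0 ≤ ∫ s in a..t, ‖g s‖ :=
      intervalIntegral.integral_nonneg ht.1 fun _ _ => norm_nonneg _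
    have hle : ∫ s in a..t, ‖g s‖ ≤ L :=
      intervalIntegral.integral_mono_interval le_rfl ht.1 ht.2
        (Filter.Eventually.of_forall fun _ => norm_nonneg _) hg.norm
    gcongr
  have hue := (Real.hasSum_cosh L)
  have huo := (Real.hasSum_sinh L)
  have sume : ∀ t ∈ Icc a b, Summable (fun j => B (2 * j) t) := fun t ht =>
    Summable.of_norm_bounded hue.summable (fun n => hbd (2 * n) t ht)
  have sumo : ∀ t ∈ Icc a b, Summable (fun j => B (2 * j + 1) t) := fun t ht =>
    Summable.of_norm_bounded huo.summable (fun n => hbd (2 * n + 1) t ht)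
  have hbm : b ∈ Icc a b := ⟨hab, le_rfl⟩
  refine ⟨sume b hbm, sumo b hbm, ?_, ?_⟩
  · refine ht_conserve (g := g) (C := fun t => ∑' j, B (2 * j) t)
      (S := fun t => ∑' j, B (2 * j + 1) t) hab hg ?_ ?_ ?_ ?_
    · exact continuousOn_tsum (fun n => (hit (2 * n)).1) hue.summable
        (fun n t ht => hbd (2 * n) t ht)
    · exact continuousOn_tsum (fun n => (hit (2 * n + 1)).1) huo.summable
        (fun n t ht => hbd (2 * n + 1) t ht)
    · intro t ht
      have h := ht_tsum hab hg (fun n => (hit (2 * n + 1)).1) huo.summable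
        (fun n t ht => hbd (2 * n + 1) t ht) t ht
      rw [(sume t ht).tsum_eq_zero_add, ← h.tsum_eq]
      congr 1
      · simp [h0]
      · refine tsum_congr fun n => ?_
        rw [← hs]
        rfl
    · intro t ht
      have h := ht_tsum hab hg (fun n => (hit (2 * n)).1) hue.summable
        (fun n t ht => hbd (2 * n) t ht) t ht
      rw [← h.tsum_eq]
      exact tsum_congr fun n => hs _ _
  · exact tsum_of_norm_bounded huo (fun n => hbd (2 * n + 1) b hbm)

lemma ht_Aiter_neg (x0 : ℝ) (α : ℝ → ℝ) (ω : ℂ) (j : ℕ) (t : ℝ) :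
    Aiter x0 (fun s => -α s) ω j t = (-1) ^ j * Aiter x0 α ω j t := by
  induction j generalizing t with
  | zero => simp [Aiter]
  | succ j ih =>
    simp only [Aiter]
    rw [← intervalIntegral.integral_const_mul]
    congr 1
    funext s
    rw [ih s]
    simp only [map_mul, map_pow, map_neg, map_one, Complex.ofReal_neg]
    ring

lemma ht_harmE (x0 y : ℝ) (α : ℝ → ℝ) (ω : ℂ)
    (se : Summable (fun j => Aiter x0 α ω (2 * j) y))
    (so : Summable (fun j => Aiter x0 α ω (2 * j + 1) y)) :
    harmE x0 y α ω = (∑' j, Aiter x0 α ω (2 * j) y) + ∑' j, Aiter x0 α ω (2 * j + 1) y ∧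
    harmE x0 y (fun s => -α s) ω
      = (∑' j, Aiter x0 α ω (2 * j) y) - ∑' j, Aiter x0 α ω (2 * j + 1) y := by
  have hneg : (fun j => Aiter x0 (fun s => -α s) ω j y)
      = fun j => (-1) ^ j * Aiter x0 α ω j y := funext fun j => ht_Aiter_neg x0 α ω j y
  unfold harmE
  rw [hneg]
  generalize hB : (fun j => Aiter x0 α ω j y) = B
  have hB' : ∀ j, Aiter x0 α ω j y = B j := fun j => by rw [← hB]
  simp only [hB'] at se so ⊢
  constructor
  · exact (tsum_even_add_odd se so).symm
  · have ee : ∀ j, (-1 : ℂ) ^ (2 * j) * B (2 * j) = B (2 * j) := by intro j; simp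
    have eo : ∀ j, (-1 : ℂ) ^ (2 * j + 1) * B (2 * j + 1) = -B (2 * j + 1) := by
      intro j; simp [pow_succ]
    rw [← tsum_even_add_odd (f := fun j => (-1 : ℂ) ^ j * B j)
      (by simpa only [ee] using se) (by simpa only [eo] using so.neg)]
    simp only [ee, eo, tsum_neg]
    rw [sub_eq_add_neg]

lemma ht_final {C S : ℂ} {L : ℝ} (hcons : ‖C‖ ^ 2 = 1 + ‖S‖ ^ 2) (hsinh : ‖S‖ ≤ Real.sinh L) :
    C + S + (C - S) ≠ 0 ∧ ‖(C + S - (C - S)) / (C + S + (C - S))‖ ≤ Real.tanh L := by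
  have hCpos : 0 < ‖C‖ := by
    rcases (norm_nonneg C).eq_or_lt with h | h
    · rw [← h] at hcons
      nlinarith [sq_nonneg ‖S‖]
    · exact h
  have hC0 : C ≠ 0 := norm_pos_iff.mp hCpos
  have e1 : C + S + (C - S) = 2 * C := by ring
  have e2 : C + S - (C - S) = 2 * S := by ring
  rw [e1, e2]
  refine ⟨mul_ne_zero two_ne_zero hC0, ?_⟩
  rw [mul_div_mul_left _ _ two_ne_zero, norm_div, Real.tanh_eq_sinh_div_cosh,
    div_le_div_iff₀ hCpos (Real.cosh_pos _)]
  have hch := Real.cosh_sq L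
  have hcp := Real.cosh_pos L
  have hs0 : 0 ≤ Real.sinh L := (norm_nonneg S).trans hsinh
  refine (pow_le_pow_iff_left₀ (by positivity) (by positivity) two_ne_zero).mp ?_
  rw [mul_pow, mul_pow, hcons, hch]
  have := pow_le_pow_left₀ (norm_nonneg S) hsinh 2
  linarith

/-- Theorem (thm-hyperbolic)(ii): the hyperbolic tangent operator
`Th_α^{(x0,y)} = (E_α − E_{−α})/(E_α + E_{−α})` is well defined (nonzero denominator)
and satisfies `|Th_α^{(x0,y)}(ω)| ≤ tanh(∫_{x0}^y |α|)` for every real `ω`. -/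
theorem hyperbolic_tangent_bound
    (x0 x1 y : ℝ) (hx : x0 < x1) (hy : y ∈ Set.Ioc x0 x1)
    (α : ℝ → ℝ) (hα : IntegrableOn α (Set.Ioo x0 x1)) :
    ∀ ω : ℝ,
      harmE x0 y α (ω : ℂ) + harmE x0 y (fun s => -α s) (ω : ℂ) ≠ 0 ∧
      ‖(harmE x0 y α (ω : ℂ) - harmE x0 y (fun s => -α s) (ω : ℂ))
          / (harmE x0 y α (ω : ℂ) + harmE x0 y (fun s => -α s) (ω : ℂ))‖
        ≤ Real.tanh (∫ s in x0..y, |α s|) := by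
  intro ω
  have hab : x0 ≤ y := hy.1.le
  have hαi : IntervalIntegrable α volume x0 y := by
    have h1 : IntervalIntegrable α volume x0 x1 :=
      (intervalIntegrable_iff_integrableOn_Ioo_of_le hx.le).mpr hα
    refine h1.mono_set ?_
    rw [Set.uIcc_of_le hab, Set.uIcc_of_le hx.le]
    exact Set.Icc_subset_Icc_right hy.2
  obtain ⟨g, hgdef⟩ : ∃ g : ℝ → ℂ, g = fun s : ℝ =>
    (α s : ℂ) * Complex.exp (2 * Complex.I * ((s : ℂ) - (x0 : ℂ)) * (ω : ℂ)) := ⟨_, rfl⟩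
  have hg : IntervalIntegrable g volume x0 y := by
    have h1 : IntervalIntegrable (fun s => (α s : ℂ)) volume x0 y :=
      ⟨hαi.1.ofReal, hαi.2.ofReal⟩
    rw [hgdef]
    exact h1.mul_continuousOn (by fun_prop)
  have hnorm : ∀ s, ‖g s‖ = |α s| := by
    intro s
    have e : 2 * Complex.I * ((s : ℂ) - (x0 : ℂ)) * (ω : ℂ)
        = ((2 * (s - x0) * ω : ℝ) : ℂ) * Complex.I := by push_cast; ring
    rw [hgdef]
    simp only [norm_mul]
    rw [e, Complex.norm_exp_ofReal_mul_I, Complex.norm_real, mul_one, Real.norm_eq_abs]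
  obtain ⟨se, so, hcons, hsinh⟩ := ht_abstract (B := Aiter x0 α ω) hab hg
    (fun t => by simp only [Aiter]) (fun j t => by simp only [Aiter, hgdef])
  simp_rw [hnorm] at hsinh
  obtain ⟨hp, hm⟩ := ht_harmE x0 y α ω se so
  rw [hp, hm]
  exact ht_final hcons hsinh
end

section
/- Fix real numbers x0 < x1 and y ∈ (x0, x1], and let α : ℝ → ℝ be Lebesgue integrable and square-integrable on (x0, x1). Then ∫_{−∞}^{∞} −log( 1 − |Th_α^{(x0,y)}(ω)|² ) dω ≤ π · ∫_{x0}^{y} |α|². (Here |Th_α^{(x0,y)}(ω)| < 1 for every real ω, so the integrand is well defined and nonnegative.) -/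
open MeasureTheory

theorem ac_mono_of_deriv_nonneg {f f' : ℝ → ℝ} {a b : ℝ} (hab : a ≤ b)
    (hf : AbsolutelyContinuousOnInterval f a b)
    (hd : ∀ᵐ x, HasDerivAt f (f' x) x) (hn : ∀ x, 0 ≤ f' x) : f a ≤ f b := by
  have h := hf.integral_deriv_eq_sub
  have : 0 ≤ ∫ x in a..b, deriv f x := by
    apply intervalIntegral.integral_nonneg_of_ae hab
    filter_upwards [hd] with x hx
    rw [hx.deriv]; exact hn x
  linarith

theorem ac_integral_eq {f f' : ℝ → ℝ} {a b : ℝ}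
    (hf : AbsolutelyContinuousOnInterval f a b)
    (hd : ∀ᵐ x, HasDerivAt f (f' x) x) : ∫ x in a..b, f' x = f b - f a := by
  rw [← hf.integral_deriv_eq_sub]
  apply intervalIntegral.integral_congr_ae
  filter_upwards [hd] with x hx _
  rw [hx.deriv]

theorem ac_comp {f g : ℝ → ℝ} {a b : ℝ} {K : NNReal}
    (hf : AbsolutelyContinuousOnInterval f a b)
    (hg : LipschitzOnWith K g (f '' Set.uIcc a b)) :
    AbsolutelyContinuousOnInterval (fun x => g (f x)) a b := by
  have h1 : Filter.Tendsto (fun E : ℕ × (ℕ → ℝ × ℝ) ↦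
      (K : ℝ) * ∑ i ∈ Finset.range E.1, dist (f (E.2 i).1) (f (E.2 i).2))
    (AbsolutelyContinuousOnInterval.totalLengthFilter ⊓
      Filter.principal (AbsolutelyContinuousOnInterval.disjWithin a b)) (nhds 0) := by
    simpa using Filter.Tendsto.const_mul (K : ℝ) hf
  refine squeeze_zero' (Filter.Eventually.of_forall fun t => Finset.sum_nonneg fun i _ => dist_nonneg)
    ?_ h1
  have : ∀ᶠ E in (AbsolutelyContinuousOnInterval.totalLengthFilter ⊓
      Filter.principal (AbsolutelyContinuousOnInterval.disjWithin a b)),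
      E ∈ AbsolutelyContinuousOnInterval.disjWithin a b :=
    Filter.mem_inf_of_right (Filter.mem_principal_self _)
  filter_upwards [this] with E hE
  rw [Finset.mul_sum]
  refine Finset.sum_le_sum fun i hi => ?_
  exact hg.dist_le_mul _ ⟨_, (hE.1 i hi).1, rfl⟩ _ ⟨_, (hE.1 i hi).2, rfl⟩

theorem ac_integral {f : ℝ → ℝ} (hf : Integrable f) (a b : ℝ) :
    AbsolutelyContinuousOnInterval (fun t => ∫ s in a..t, f s) a b :=
  (hf.intervalIntegrable).absolutelyContinuousOnInterval_intervalIntegral (by simp)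

theorem ae_deriv_integral {E : Type*} [NormedAddCommGroup E] [NormedSpace ℝ E] [CompleteSpace E]
    {f : ℝ → E} (hf : Integrable f) (a : ℝ) :
    ∀ᵐ x, HasDerivAt (fun t => ∫ s in a..t, f s) (f x) x := by
  filter_upwards [_root_.LocallyIntegrable.ae_hasDerivAt_integral hf.locallyIntegrable] with x hx using hx a

theorem ac_pow {f : ℝ → ℝ} {a b : ℝ} (hf : AbsolutelyContinuousOnInterval f a b) (n : ℕ) :
    AbsolutelyContinuousOnInterval (fun x => f x ^ (n+1)) a b := by
  induction n with
  | zero => simpa using hf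
  | succ n ih =>
    have := ih.fun_mul hf
    simpa only [pow_succ] using this

theorem integral_pow_prim {m : ℝ → ℝ} (hm : Integrable m) (a t : ℝ) (n : ℕ) :
    ∫ s in a..t, m s * (∫ r in a..s, m r) ^ n = (∫ r in a..t, m r) ^ (n+1) / (n+1) := by
  have h := ac_integral_eq (ac_pow (ac_integral hm a t) n)
    (f' := fun x => ((n+1 : ℕ) : ℝ) * (∫ r in a..x, m r) ^ n * m x) (by
      filter_upwards [ae_deriv_integral hm a] with x hx
      simpa using hx.fun_pow (n+1))
  have h0 : (n : ℝ) + 1 ≠ 0 := by positivity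
  rw [eq_div_iff h0, ← intervalIntegral.integral_mul_const]
  simp at h
  rw [← h]
  congr 1; ext s; ring

/-- Gronwall, differential form -/
theorem ac_gronwall {W W' b : ℝ → ℝ} {x y : ℝ} (hxy : x ≤ y) (hb : Integrable b)
    (hb0 : ∀ s, 0 ≤ b s)
    (hW : AbsolutelyContinuousOnInterval W x y) (hd : ∀ᵐ t, HasDerivAt W (W' t) t)
    (hle : ∀ t, W' t ≤ b t * W t) : W y ≤ W x * Real.exp (∫ s in x..y, b s) := by
  set B := fun t => ∫ s in x..t, b s with hB
  have hBac := ac_integral hb x y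
  have hexp : AbsolutelyContinuousOnInterval (fun t => Real.exp (-(B t))) x y := by
    refine ac_comp (K := 1) (f := B) (g := fun u => Real.exp (-u)) hBac ?_
    have hs : (B '' Set.uIcc x y) ⊆ Set.Ici 0 := by
      rintro _ ⟨t, ht, rfl⟩
      rw [Set.uIcc_of_le hxy] at ht
      exact intervalIntegral.integral_nonneg ht.1 (fun s _ => hb0 s)
    refine LipschitzOnWith.mono ?_ hs
    refine (convex_Ici 0).lipschitzOnWith_of_nnnorm_hasDerivWithin_le
      (f' := fun u => Real.exp (-u) * (-1)) ?_ ?_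
    · intro u _
      exact ((hasDerivAt_neg u).exp).hasDerivWithinAt
    · intro u hu
      rw [← NNReal.coe_le_coe]
      simpa using hu
  have hm := ac_mono_of_deriv_nonneg hxy (hexp.fun_mul hW).fun_neg
    (f' := fun t => - (Real.exp (-(B t)) * (-(b t)) * W t + Real.exp (-(B t)) * W' t)) (by
      filter_upwards [hd, ae_deriv_integral hb x] with t h1 h2
      exact ((h2.fun_neg.exp).fun_mul h1).fun_neg) (by
      intro t
      have := mul_le_mul_of_nonneg_left (hle t) (Real.exp_pos (-(B t))).le
      linarith)
  have h0 : B x = 0 := by simp [hB]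
  have : Real.exp (-(B y)) * W y ≤ W x := by simpa [h0] using hm
  have h2 := mul_le_mul_of_nonneg_right this (Real.exp_pos (B y)).le
  rwa [mul_right_comm, ← Real.exp_add, neg_add_cancel, Real.exp_zero, one_mul] at h2


theorem differentiable_integral_param {μ : Measure ℝ} {F : ℂ → ℝ → ℂ}
    (hd : ∀ s, Differentiable ℂ (fun ω => F ω s))
    (hm : ∀ ω, AEStronglyMeasurable (F ω) μ)
    (hb : ∀ R : ℝ, ∃ b : ℝ → ℝ, Integrable b μ ∧ ∀ ω s, ‖ω‖ ≤ R → ‖F ω s‖ ≤ b s) :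
    Differentiable ℂ (fun ω => ∫ s, F ω s ∂μ) := by
  intro ω₀
  obtain ⟨b, hbi, hb⟩ := hb (‖ω₀‖ + 2)
  have hint : ∀ ω, ‖ω‖ ≤ ‖ω₀‖ + 2 → Integrable (F ω) μ := fun ω hω =>
    hbi.mono' (hm ω) (Filter.Eventually.of_forall fun s => hb ω s hω)
  refine (hasDerivAt_integral_of_dominated_loc_of_deriv_le (μ := μ) (F := F) (x₀ := ω₀)
    (F' := fun ω s => deriv (fun w => F w s) ω) (bound := b)
    (Metric.ball_mem_nhds ω₀ one_pos) (Filter.Eventually.of_forall hm)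
    (hint ω₀ (by linarith)) ?_ ?_ hbi ?_).2.differentiableAt
  · -- measurability of the derivative
    have hseq : Filter.Tendsto (fun n : ℕ => ((1 : ℂ) / ((n : ℂ) + 1))) Filter.atTop
        (nhdsWithin 0 {0}ᶜ) := by
      rw [tendsto_nhdsWithin_iff]
      refine ⟨tendsto_one_div_add_atTop_nhds_zero_nat, Filter.Eventually.of_forall fun n => ?_⟩
      simp only [Set.mem_compl_iff, Set.mem_singleton_iff, one_div, inv_eq_zero]
      exact Nat.cast_add_one_ne_zero n
    refine aestronglyMeasurable_of_tendsto_ae Filter.atTop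
      (f := fun (n : ℕ) s => ((1 : ℂ) / ((n : ℂ) + 1))⁻¹ • (F (ω₀ + (1 : ℂ) / ((n : ℂ) + 1)) s - F ω₀ s))
      (fun n => ((hm _).fun_sub (hm _)).fun_const_smul _) (Filter.Eventually.of_forall fun s => ?_)
    have h := ((hd s) ω₀).hasDerivAt
    rw [hasDerivAt_iff_tendsto_slope_zero] at h
    exact h.comp hseq
  · refine Filter.Eventually.of_forall fun s ω hω => ?_
    have := Complex.norm_deriv_le_of_forall_mem_sphere_norm_le (c := ω) (R := 1) (C := b s)
      (f := fun w => F w s) one_pos (hd s).diffContOnCl (by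
        intro z hz
        apply hb
        have h1 : ‖z - ω‖ = 1 := by simpa [dist_eq_norm] using hz
        have h2 : ‖ω - ω₀‖ < 1 := by simpa [dist_eq_norm] using hω
        calc ‖z‖ = ‖(z - ω) + (ω - ω₀) + ω₀‖ := by congr 1; ring
          _ ≤ ‖z - ω‖ + ‖ω - ω₀‖ + ‖ω₀‖ := norm_add₃_le
          _ ≤ _ := by linarith)
    simpa using this
  · exact Filter.Eventually.of_forall fun s ω _ => ((hd s) ω).hasDerivAt

noncomputable def hEE (x0 : ℝ) (ω : ℂ) (s : ℝ) : ℂ :=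
  Complex.exp (2 * Complex.I * ((s : ℂ) - (x0 : ℂ)) * ω)

theorem hEE_cont (x0 : ℝ) (ω : ℂ) : Continuous (hEE x0 ω) := by
  unfold hEE; fun_prop

theorem hEE_diff (x0 : ℝ) (s : ℝ) : Differentiable ℂ (fun ω => hEE x0 ω s) := by
  unfold hEE; fun_prop

theorem hEE_norm_le {x0 y s R : ℝ} {ω : ℂ} (hs : s ∈ Set.Ioc x0 y) (hω : ‖ω‖ ≤ R) :
    ‖hEE x0 ω s‖ ≤ Real.exp (2 * (y - x0) * R) := by
  unfold hEE
  rw [Complex.norm_exp]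
  apply Real.exp_le_exp.2
  refine (Complex.re_le_norm _).trans ?_
  rw [norm_mul, norm_mul, norm_mul, ← Complex.ofReal_sub, Complex.norm_real, Complex.norm_I,
    Complex.norm_two, mul_one, Real.norm_eq_abs, abs_of_pos (sub_pos.2 hs.1)]
  have h1 : s - x0 ≤ y - x0 := by linarith [hs.2]
  have h0 : 0 < s - x0 := sub_pos.2 hs.1
  gcongr
  linarith

noncomputable def hPP (x0 : ℝ) (β : ℝ → ℝ) : ℕ → ℂ → ℝ → ℂ
  | 0 => fun _ _ => 1
  | j + 1 => fun ω t => ∫ s in x0..t, (β s : ℂ) * hEE x0 ω s * hPP x0 β j (-ω) s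

section
variable {x0 y : ℝ} {β : ℝ → ℝ}

theorem hker_bound (hs : ∀ s, s ∉ Set.Ioc x0 y → β s = 0) {ω : ℂ} {R : ℝ} (hω : ‖ω‖ ≤ R) (s : ℝ) :
    ‖(β s : ℂ) * hEE x0 ω s‖ ≤ |β s| * Real.exp (2 * (y - x0) * R) := by
  by_cases h : s ∈ Set.Ioc x0 y
  · rw [norm_mul, Complex.norm_real, Real.norm_eq_abs]
    exact mul_le_mul_of_nonneg_left (hEE_norm_le h hω) (abs_nonneg _)
  · simp [hs s h]

theorem hker_meas (hβ : Integrable β) (ω : ℂ) :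
    AEStronglyMeasurable (fun s => (β s : ℂ) * hEE x0 ω s) volume :=
  hβ.ofReal.aestronglyMeasurable.mul (hEE_cont x0 ω).aestronglyMeasurable

theorem hker_int (hβ : Integrable β) (hs : ∀ s, s ∉ Set.Ioc x0 y → β s = 0) (ω : ℂ) :
    Integrable (fun s => (β s : ℂ) * hEE x0 ω s) :=
  (hβ.abs.mul_const _).mono' (hker_meas hβ ω)
    (Filter.Eventually.of_forall (hker_bound hs le_rfl))

theorem hker_mul_int (hβ : Integrable β) (hs : ∀ s, s ∉ Set.Ioc x0 y → β s = 0) (ω : ℂ)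
    {F : ℝ → ℂ} (hF : Continuous F) {M : ℝ} (hM : ∀ s, ‖F s‖ ≤ M) :
    Integrable (fun s => (β s : ℂ) * hEE x0 ω s * F s) :=
  (hker_int hβ hs ω).mul_bdd hF.aestronglyMeasurable (Filter.Eventually.of_forall hM)

theorem hprim_nonneg (hs : ∀ s, s ∉ Set.Ioc x0 y → β s = 0) (t : ℝ) :
    0 ≤ ∫ s in x0..t, |β s| := by
  rcases le_total x0 t with h | h
  · exact intervalIntegral.integral_nonneg h (fun _ _ => abs_nonneg _)
  · rw [intervalIntegral.integral_symm, intervalIntegral.integral_of_le h]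
    rw [setIntegral_congr_fun (g := fun _ => (0:ℝ)) measurableSet_Ioc]
    · simp
    · intro s hs'
      simp [hs s (fun hh => absurd hh.1 (not_lt.2 hs'.2))]

theorem hPP_neg (hs : ∀ s, s ∉ Set.Ioc x0 y → β s = 0) (j : ℕ) (ω : ℂ) {t : ℝ} (ht : t ≤ x0) :
    hPP x0 β (j+1) ω t = 0 := by
  show (∫ s in x0..t, (β s : ℂ) * hEE x0 ω s * hPP x0 β j (-ω) s) = 0
  rw [intervalIntegral.integral_symm, intervalIntegral.integral_of_le ht]
  rw [setIntegral_congr_fun (g := fun _ => (0:ℂ)) measurableSet_Ioc]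
  · simp
  · intro s hs'
    simp [hs s (fun hh => absurd hh.1 (not_lt.2 hs'.2))]

theorem hPP_basic (hβ : Integrable β) (hs : ∀ s, s ∉ Set.Ioc x0 y → β s = 0) (R : ℝ) (j : ℕ) :
    ∀ ω : ℂ, ‖ω‖ ≤ R → Continuous (hPP x0 β j ω) ∧
      (∀ t, ‖hPP x0 β j ω t‖ ≤
        Real.exp (2 * (y - x0) * R) ^ j * (∫ s in x0..t, |β s|) ^ j / j.factorial) ∧
      (∀ t, ‖hPP x0 β j ω t‖ ≤
        (Real.exp (2 * (y - x0) * R) * (∫ s, |β s|)) ^ j / j.factorial) := by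
  set K := Real.exp (2 * (y - x0) * R) with hK
  have hK0 : 0 < K := Real.exp_pos _
  have haA : ∀ t, (∫ s in x0..t, |β s|) ≤ ∫ s, |β s| := by
    intro t
    rcases le_total x0 t with h | h
    · rw [intervalIntegral.integral_of_le h]
      exact setIntegral_le_integral hβ.abs (Filter.Eventually.of_forall fun _ => abs_nonneg _)
    · rw [intervalIntegral.integral_symm]
      have h1 : 0 ≤ ∫ s in t..x0, |β s| := intervalIntegral.integral_nonneg h (fun _ _ => abs_nonneg _)
      have h2 : 0 ≤ ∫ s, |β s| := integral_nonneg (fun _ => abs_nonneg _)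
      linarith
  have key : ∀ j, (∀ ω : ℂ, ‖ω‖ ≤ R → Continuous (hPP x0 β j ω) ∧
      (∀ t, ‖hPP x0 β j ω t‖ ≤ K ^ j * (∫ s in x0..t, |β s|) ^ j / j.factorial)) →
      ∀ ω : ℂ, ‖ω‖ ≤ R → (∀ t, ‖hPP x0 β j ω t‖ ≤ (K * (∫ s, |β s|)) ^ j / j.factorial) := by
    intro j h ω hω t
    refine ((h ω hω).2 t).trans ?_
    rw [mul_pow]
    have := haA t
    have := hprim_nonneg (x0 := x0) hs t
    gcongr
  have main : ∀ j, (∀ ω : ℂ, ‖ω‖ ≤ R → Continuous (hPP x0 β j ω) ∧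
      (∀ t, ‖hPP x0 β j ω t‖ ≤ K ^ j * (∫ s in x0..t, |β s|) ^ j / j.factorial)) := by
    intro j
    induction j with
    | zero => intro ω _; exact ⟨continuous_const, fun t => by simp [hPP]⟩
    | succ j ih =>
      intro ω hω
      have hω' : ‖-ω‖ ≤ R := by simpa using hω
      have hint := hker_mul_int hβ hs ω (ih (-ω) hω').1 (key j ih (-ω) hω')
      refine ⟨?_, fun t => ?_⟩
      · exact intervalIntegral.continuous_primitive (fun a b => hint.intervalIntegrable) x0
      · rcases le_total t x0 with h | h
        · rw [hPP_neg hs j ω h, norm_zero]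
          have := hprim_nonneg (x0 := x0) hs t
          positivity
        · have hb : ∀ s, ‖(β s : ℂ) * hEE x0 ω s * hPP x0 β j (-ω) s‖ ≤
              (K ^ (j+1) / j.factorial) * (|β s| * (∫ r in x0..s, |β r|) ^ j) := by
            intro s
            rw [norm_mul]
            calc _ ≤ (|β s| * K) * (K ^ j * (∫ r in x0..s, |β r|) ^ j / j.factorial) := by
                  gcongr
                  · exact hker_bound hs hω s
                  · exact (ih (-ω) hω').2 s
              _ = _ := by ring
          have hi : Integrable (fun s => |β s| * (∫ r in x0..s, |β r|) ^ j) := by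
            refine hβ.abs.mul_bdd (c := (∫ s, |β s|) ^ j) ?_ (Filter.Eventually.of_forall fun s => ?_)
            · exact ((intervalIntegral.continuous_primitive
                (fun a b => hβ.abs.intervalIntegrable) x0).pow j).aestronglyMeasurable
            · rw [norm_pow, Real.norm_eq_abs, abs_of_nonneg (hprim_nonneg hs s)]
              exact pow_le_pow_left₀ (hprim_nonneg hs s) (haA s) j
          calc ‖hPP x0 β (j+1) ω t‖ ≤ ∫ s in x0..t,
                (K ^ (j+1) / j.factorial) * (|β s| * (∫ r in x0..s, |β r|) ^ j) :=
                intervalIntegral.norm_integral_le_of_norm_le h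
                  (Filter.Eventually.of_forall fun s _ => hb s)
                  (hi.const_mul _).intervalIntegrable
            _ = _ := by
                rw [intervalIntegral.integral_const_mul, integral_pow_prim hβ.abs,
                  Nat.factorial_succ]
                push_cast
                field_simp
  intro ω hω
  exact ⟨(main j ω hω).1, (main j ω hω).2, key j (main j) ω hω⟩

theorem hPP_diff (hβ : Integrable β) (hs : ∀ s, s ∉ Set.Ioc x0 y → β s = 0) (j : ℕ) :
    ∀ t, Differentiable ℂ (fun ω => hPP x0 β j ω t) := by
  induction j with
  | zero => intro t; exact differentiable_const _
  | succ j ih =>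
    intro t
    show Differentiable ℂ (fun ω => ∫ s in x0..t, (β s : ℂ) * hEE x0 ω s * hPP x0 β j (-ω) s)
    simp_rw [intervalIntegral.intervalIntegral_eq_integral_uIoc]
    refine Differentiable.const_smul ?_ _
    apply differentiable_integral_param
    · intro s
      exact ((differentiable_const _).mul (hEE_diff x0 s)).mul ((ih s).comp differentiable_neg)
    · intro ω
      exact ((hker_meas hβ ω).mul
        (hPP_basic hβ hs ‖-ω‖ j (-ω) le_rfl).1.aestronglyMeasurable).restrict
    · intro R
      refine ⟨_, ((hβ.abs.mul_const (Real.exp (2 * (y - x0) * R))).mul_const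
        ((Real.exp (2 * (y - x0) * R) * (∫ s, |β s|)) ^ j / j.factorial)).restrict, ?_⟩
      intro ω s hω
      rw [norm_mul]
      gcongr
      · exact hker_bound hs hω s
      · exact (hPP_basic hβ hs R j (-ω) (by simpa using hω)).2.2 s

noncomputable def hQQ (x0 : ℝ) (β : ℝ → ℝ) (ω : ℂ) (t : ℝ) : ℂ := ∑' j, hPP x0 β j ω t

theorem hQQ_diff (hβ : Integrable β) (hs : ∀ s, s ∉ Set.Ioc x0 y → β s = 0) (t : ℝ) :
    Differentiable ℂ (fun ω => hQQ x0 β ω t) := by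
  intro ω
  have := Complex.differentiableOn_tsum_of_summable_norm (U := Metric.ball 0 (‖ω‖ + 1))
    (F := fun j ω => hPP x0 β j ω t)
    (Real.summable_pow_div_factorial (Real.exp (2 * (y - x0) * (‖ω‖ + 1)) * (∫ s, |β s|)))
    (fun j => (hPP_diff hβ hs j t).differentiableOn) Metric.isOpen_ball
    (fun j w hw => (hPP_basic hβ hs (‖ω‖ + 1) j w (by
      simpa using (mem_ball_zero_iff.1 hw).le)).2.2 t)
  exact this.differentiableAt (Metric.isOpen_ball.mem_nhds (by simp))

theorem hPP_summable (hβ : Integrable β) (hs : ∀ s, s ∉ Set.Ioc x0 y → β s = 0) (ω : ℂ) (t : ℝ) :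
    Summable (fun j => hPP x0 β j ω t) :=
  Summable.of_norm_bounded (Real.summable_pow_div_factorial _)
    (fun j => (hPP_basic hβ hs ‖ω‖ j ω le_rfl).2.2 t)

theorem hQQ_cont (hβ : Integrable β) (hs : ∀ s, s ∉ Set.Ioc x0 y → β s = 0) (ω : ℂ) :
    Continuous (hQQ x0 β ω) :=
  continuous_tsum (fun j => (hPP_basic hβ hs ‖ω‖ j ω le_rfl).1)
    (Real.summable_pow_div_factorial _) (fun j t => (hPP_basic hβ hs ‖ω‖ j ω le_rfl).2.2 t)

theorem hQQ_bdd (hβ : Integrable β) (hs : ∀ s, s ∉ Set.Ioc x0 y → β s = 0) (ω : ℂ) :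
    ∃ M, ∀ t, ‖hQQ x0 β ω t‖ ≤ M :=
  ⟨_, fun t => tsum_of_norm_bounded (Real.summable_pow_div_factorial _).hasSum
    (fun j => (hPP_basic hβ hs ‖ω‖ j ω le_rfl).2.2 t)⟩

theorem hQQ_eq (hβ : Integrable β) (hs : ∀ s, s ∉ Set.Ioc x0 y → β s = 0) (ω : ℂ) (t : ℝ) :
    hQQ x0 β ω t = 1 + ∫ s in x0..t, (β s : ℂ) * hEE x0 ω s * hQQ x0 β (-ω) s := by
  have hsum := Real.summable_pow_div_factorial
    (Real.exp (2 * (y - x0) * ‖ω‖) * (∫ s, |β s|))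
  have h : HasSum (fun j => hPP x0 β (j+1) ω t)
      (∫ s in x0..t, (β s : ℂ) * hEE x0 ω s * hQQ x0 β (-ω) s) := by
    refine intervalIntegral.hasSum_integral_of_dominated_convergence
      (fun j s => (|β s| * Real.exp (2 * (y - x0) * ‖ω‖)) *
        ((Real.exp (2 * (y - x0) * ‖ω‖) * (∫ s, |β s|)) ^ j / j.factorial)) ?_ ?_ ?_ ?_ ?_
    · intro j
      exact ((hker_meas hβ ω).mul
        (hPP_basic hβ hs ‖-ω‖ j (-ω) le_rfl).1.aestronglyMeasurable).restrict
    · intro j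
      refine Filter.Eventually.of_forall fun s _ => ?_
      rw [norm_mul]
      gcongr
      · exact hker_bound hs le_rfl s
      · exact (hPP_basic hβ hs ‖ω‖ j (-ω) (by simp)).2.2 s
    · exact Filter.Eventually.of_forall fun s _ => hsum.mul_left _
    · simp_rw [tsum_mul_left]
      exact ((hβ.abs.mul_const _).mul_const _).intervalIntegrable
    · exact Filter.Eventually.of_forall fun s _ =>
        (hPP_summable hβ hs (-ω) s).hasSum.mul_left _
  unfold hQQ
  rw [(hPP_summable hβ hs ω t).tsum_eq_zero_add, h.tsum_eq]
  rfl

end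


theorem ac_normSq_prim {f : ℝ → ℂ} (hf : Integrable f) (k : ℂ) (a b : ℝ) :
    AbsolutelyContinuousOnInterval (fun t => ‖k + ∫ s in a..t, f s‖ ^ 2) a b := by
  have hre : AbsolutelyContinuousOnInterval (fun t => k.re + ∫ s in a..t, (f s).re) a b := by
    refine AbsolutelyContinuousOnInterval.fun_add ?_ (ac_integral hf.re a b)
    exact contDiffOn_const.absolutelyContinuousOnInterval
  have him : AbsolutelyContinuousOnInterval (fun t => k.im + ∫ s in a..t, (f s).im) a b := by
    refine AbsolutelyContinuousOnInterval.fun_add ?_ (ac_integral hf.im a b)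
    exact contDiffOn_const.absolutelyContinuousOnInterval
  have h := (hre.fun_mul hre).fun_add (him.fun_mul him)
  refine Eq.subst (motive := fun u => AbsolutelyContinuousOnInterval u a b) (funext fun t => ?_) h
  have h1 : (∫ s in a..t, f s).re = ∫ s in a..t, (f s).re := by
    have := Complex.reCLM.intervalIntegral_comp_comm (hf.intervalIntegrable (a := a) (b := t))
    simpa using this.symm
  have h2 : (∫ s in a..t, f s).im = ∫ s in a..t, (f s).im := by
    have := Complex.imCLM.intervalIntegral_comp_comm (hf.intervalIntegrable (a := a) (b := t))
    simpa using this.symm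
  rw [← Complex.normSq_eq_norm_sq, Complex.normSq_apply, Complex.add_re, Complex.add_im, h1, h2]

noncomputable def hhh (x0 η s : ℝ) : ℝ := Real.exp (-4 * η * (s - x0))

theorem hhh_deriv (x0 η t : ℝ) : HasDerivAt (hhh x0 η) (-4 * η * hhh x0 η t) t := by
  unfold hhh
  have := (((hasDerivAt_id t).sub_const x0).const_mul (-4 * η)).exp
  refine this.congr_deriv ?_
  simp only [id]; ring

theorem hhh_ac (x0 η a b : ℝ) : AbsolutelyContinuousOnInterval (hhh x0 η) a b := by
  apply ContDiffOn.absolutelyContinuousOnInterval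
  unfold hhh
  fun_prop

theorem hEE_norm_sq (x0 : ℝ) (ω : ℂ) (s : ℝ) : ‖hEE x0 ω s‖ ^ 2 = hhh x0 ω.im s := by
  unfold hEE hhh
  rw [Complex.norm_exp, ← Real.exp_nat_mul]
  congr 1
  rw [← Complex.ofReal_sub]
  simp
  ring

theorem hEE_inv (x0 : ℝ) (ω : ℂ) (s : ℝ) : hEE x0 ω s * hEE x0 (-ω) s = 1 := by
  unfold hEE
  rw [← Complex.exp_add]
  simp

theorem hEE_key (x0 : ℝ) (ω : ℂ) (s : ℝ) :
    (hhh x0 ω.im s : ℂ) * hEE x0 (-ω) s = (starRingEnd ℂ) (hEE x0 ω s) := by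
  rw [← hEE_norm_sq, ← Complex.normSq_eq_norm_sq, Complex.normSq_eq_conj_mul_self, mul_assoc,
    hEE_inv, mul_one]

section
variable {x0 y : ℝ} {β : ℝ → ℝ} {c d : ℝ → ℂ} {ω : ℂ}

theorem hsys_deriv
    (hf : Integrable (fun s => (β s : ℂ) * hEE x0 ω s * d s))
    (hg : Integrable (fun s => (β s : ℂ) * hEE x0 (-ω) s * c s))
    (hc : ∀ t, c t = 1 + ∫ s in x0..t, (β s : ℂ) * hEE x0 ω s * d s)
    (hd : ∀ t, d t = 0 + ∫ s in x0..t, (β s : ℂ) * hEE x0 (-ω) s * c s) :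
    ∀ᵐ t, HasDerivAt (fun t => ‖c t‖ ^ 2)
        (2 * β t * ((starRingEnd ℂ) (c t) * (hEE x0 ω t * d t)).re) t ∧
      HasDerivAt (fun t => hhh x0 ω.im t * ‖d t‖ ^ 2)
        (2 * β t * ((starRingEnd ℂ) (c t) * (hEE x0 ω t * d t)).re
          - 4 * ω.im * (hhh x0 ω.im t * ‖d t‖ ^ 2)) t := by
  filter_upwards [ae_deriv_integral hf x0, ae_deriv_integral hg x0] with t h1 h2
  have hc' : HasDerivAt c ((β t : ℂ) * hEE x0 ω t * d t) t := by
    rw [funext hc]; simpa using h1.const_add 1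
  have hd' : HasDerivAt d ((β t : ℂ) * hEE x0 (-ω) t * c t) t := by
    rw [funext hd]; simpa using h2
  refine ⟨?_, ?_⟩
  · refine hc'.norm_sq.congr_deriv ?_
    symm
    rw [Complex.inner, mul_assoc (2:ℝ), ← Complex.re_ofReal_mul]
    congr 2; ring
  · refine ((hhh_deriv x0 ω.im t).fun_mul hd'.norm_sq).congr_deriv ?_
    have : (hhh x0 ω.im t) * (2 * inner ℝ (d t) ((β t : ℂ) * hEE x0 (-ω) t * c t))
        = 2 * β t * ((starRingEnd ℂ) (c t) * (hEE x0 ω t * d t)).re := by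
      rw [Complex.inner, mul_left_comm, mul_assoc (2:ℝ)]
      congr 1
      rw [← Complex.re_ofReal_mul, ← Complex.re_ofReal_mul]
      have e1 : (hhh x0 ω.im t : ℂ) * ((β t : ℂ) * hEE x0 (-ω) t * c t * (starRingEnd ℂ) (d t))
        = (β t : ℂ) * ((starRingEnd ℂ) (d t) * c t) * ((hhh x0 ω.im t : ℂ) * hEE x0 (-ω) t) := by ring
      rw [e1, hEE_key]
      rw [← Complex.conj_re]
      congr 1
      simp
      ring
    rw [this]; ring

theorem hsys_V (hxy : x0 ≤ y)
    (hf : Integrable (fun s => (β s : ℂ) * hEE x0 ω s * d s))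
    (hg : Integrable (fun s => (β s : ℂ) * hEE x0 (-ω) s * c s))
    (hc : ∀ t, c t = 1 + ∫ s in x0..t, (β s : ℂ) * hEE x0 ω s * d s)
    (hd : ∀ t, d t = 0 + ∫ s in x0..t, (β s : ℂ) * hEE x0 (-ω) s * c s) :
    (0 ≤ ω.im → 1 + hhh x0 ω.im y * ‖d y‖ ^ 2 ≤ ‖c y‖ ^ 2) ∧
    (ω.im ≤ 0 → ‖c y‖ ^ 2 ≤ 1 + hhh x0 ω.im y * ‖d y‖ ^ 2) := by
  have hac : AbsolutelyContinuousOnInterval (fun t => ‖c t‖ ^ 2) x0 y := by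
    rw [funext hc]; exact ac_normSq_prim hf 1 x0 y
  have had : AbsolutelyContinuousOnInterval (fun t => ‖d t‖ ^ 2) x0 y := by
    rw [funext hd]; exact ac_normSq_prim hg 0 x0 y
  have hV := hac.fun_sub ((hhh_ac x0 ω.im x0 y).fun_mul had)
  have hc0 : c x0 = 1 := by rw [hc]; simp
  have hd0 : d x0 = 0 := by rw [hd]; simp
  have hder : ∀ᵐ t, HasDerivAt (fun t => ‖c t‖ ^ 2 - hhh x0 ω.im t * ‖d t‖ ^ 2)
      (4 * ω.im * (hhh x0 ω.im t * ‖d t‖ ^ 2)) t := by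
    filter_upwards [hsys_deriv hf hg hc hd] with t ht
    refine (ht.1.fun_sub ht.2).congr_deriv ?_
    ring
  have hpos : ∀ t, 0 ≤ hhh x0 ω.im t * ‖d t‖ ^ 2 := fun t =>
    mul_nonneg (Real.exp_pos _).le (sq_nonneg _)
  refine ⟨fun hη => ?_, fun hη => ?_⟩
  · have := ac_mono_of_deriv_nonneg hxy hV hder (fun t => mul_nonneg (by linarith) (hpos t))
    simp [hc0, hd0] at this
    linarith
  · have := ac_mono_of_deriv_nonneg hxy hV.fun_neg (hder.mono fun t ht => ht.fun_neg)
      (fun t => by have := mul_nonneg (neg_nonneg.2 hη) (hpos t); linarith)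
    simp [hc0, hd0] at this
    linarith

theorem hsys_W (hxy : x0 ≤ y) (hη : 0 < ω.im) (hβ2 : Integrable (fun s => β s ^ 2))
    (hf : Integrable (fun s => (β s : ℂ) * hEE x0 ω s * d s))
    (hg : Integrable (fun s => (β s : ℂ) * hEE x0 (-ω) s * c s))
    (hc : ∀ t, c t = 1 + ∫ s in x0..t, (β s : ℂ) * hEE x0 ω s * d s)
    (hd : ∀ t, d t = 0 + ∫ s in x0..t, (β s : ℂ) * hEE x0 (-ω) s * c s) :
    ‖c y‖ ^ 2 ≤ Real.exp ((∫ s in x0..y, β s ^ 2) / ω.im) := by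
  have hac : AbsolutelyContinuousOnInterval (fun t => ‖c t‖ ^ 2) x0 y := by
    rw [funext hc]; exact ac_normSq_prim hf 1 x0 y
  have had : AbsolutelyContinuousOnInterval (fun t => ‖d t‖ ^ 2) x0 y := by
    rw [funext hd]; exact ac_normSq_prim hg 0 x0 y
  have hW := hac.fun_add ((hhh_ac x0 ω.im x0 y).fun_mul had)
  have hc0 : c x0 = 1 := by rw [hc]; simp
  have hd0 : d x0 = 0 := by rw [hd]; simp
  have hpos : ∀ t, 0 ≤ hhh x0 ω.im t * ‖d t‖ ^ 2 := fun t =>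
    mul_nonneg (Real.exp_pos _).le (sq_nonneg _)
  have := ac_gronwall hxy (hβ2.div_const ω.im) (fun s => by positivity) hW
    ((hsys_deriv hf hg hc hd).mono fun t ht => ht.1.fun_add ht.2) (by
      intro t
      set X := ((starRingEnd ℂ) (c t) * (hEE x0 ω t * d t)).re with hX
      set q := ‖hEE x0 ω t * d t‖ with hq
      have hXle : |X| ≤ ‖c t‖ * q := by
        refine (Complex.abs_re_le_norm _).trans ?_
        rw [norm_mul, RCLike.norm_conj]
      have hq2 : hhh x0 ω.im t * ‖d t‖ ^ 2 = q ^ 2 := by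
        rw [hq, norm_mul, mul_pow, hEE_norm_sq]
      rw [hq2]
      have h1 : β t * X ≤ |β t| * (‖c t‖ * q) := by
        refine (le_abs_self _).trans ?_
        rw [abs_mul]
        exact mul_le_mul_of_nonneg_left hXle (abs_nonneg _)
      have h2 : 4 * (|β t| * (‖c t‖ * q)) ≤ 4 * ω.im * q ^ 2 + β t ^ 2 / ω.im * ‖c t‖ ^ 2 := by
        have h3 : 4 * ω.im * q ^ 2 + β t ^ 2 / ω.im * ‖c t‖ ^ 2 - 4 * (|β t| * (‖c t‖ * q))
          = (2 * ω.im * q - |β t| * ‖c t‖) ^ 2 / ω.im := by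
          rw [← sq_abs (β t)]
          field_simp
          ring
        have h4 : 0 ≤ (2 * ω.im * q - |β t| * ‖c t‖) ^ 2 / ω.im := by positivity
        linarith
      have h5 : 0 ≤ β t ^ 2 / ω.im * q ^ 2 := by positivity
      rw [mul_add]
      linarith)
  simp only [hc0, hd0, norm_zero, norm_one, intervalIntegral.integral_div] at this
  have h2 := hpos y
  simp only [one_pow, ne_eq, OfNat.ofNat_ne_zero, not_false_eq_true, zero_pow, mul_zero, add_zero,
    one_mul] at this
  linarith

end


noncomputable def hMob (η : ℝ) (w : ℂ) : ℂ := Complex.I * η * (1 + w) / (1 - w)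

theorem hMob_im (η : ℝ) (w : ℂ) : (hMob η w).im = η * (1 - ‖w‖ ^ 2) / ‖1 - w‖ ^ 2 := by
  unfold hMob
  rw [← Complex.normSq_eq_norm_sq, ← Complex.normSq_eq_norm_sq, Complex.div_im]
  simp [Complex.normSq_apply]
  rw [← sub_div]
  congr 1
  ring

theorem hMob_an (η : ℝ) {w : ℂ} (hw : ‖w‖ < 1) : AnalyticAt ℂ (hMob η) w := by
  unfold hMob
  have : 1 - w ≠ 0 := by
    intro h
    have : w = 1 := (sub_eq_zero.1 h).symm
    simp [this] at hw
  fun_prop (disch := assumption)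

theorem hMob_mean {f : ℂ → ℂ} (hf : Differentiable ℂ f)
    (h1 : ∀ z : ℂ, 0 ≤ z.im → 1 ≤ ‖f z‖) {η ρ : ℝ} (hη : 0 < η) (hρ0 : 0 < ρ) (hρ : ρ < 1) :
    ∫⁻ θ in Set.Ioo 0 (2 * Real.pi), ENNReal.ofReal (Real.log ‖f (hMob η (circleMap 0 ρ θ))‖)
      = ENNReal.ofReal (2 * Real.pi * Real.log ‖f (Complex.I * η)‖) := by
  have him : ∀ w : ℂ, ‖w‖ < 1 → 0 ≤ (hMob η w).im := by
    intro w hw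
    rw [hMob_im]
    have : 0 ≤ 1 - ‖w‖ ^ 2 := by nlinarith [norm_nonneg w]
    positivity
  have hharm : InnerProductSpace.HarmonicOnNhd (fun w => Real.log ‖f (hMob η w)‖)
      (Metric.closedBall 0 |ρ|) := by
    intro w hw
    have hw1 : ‖w‖ < 1 := by
      rw [abs_of_pos hρ0, mem_closedBall_zero_iff] at hw; linarith
    have han : AnalyticAt ℂ (fun w => f (hMob η w)) w :=
      (hf.analyticAt _).comp (hMob_an η hw1)
    refine han.harmonicAt_log_norm ?_
    intro h0
    have := h1 _ (him w hw1)
    rw [h0, norm_zero] at this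
    linarith
  have h := hharm.circleAverage_eq
  have hint : CircleIntegrable (fun w => Real.log ‖f (hMob η w)‖) 0 ρ :=
    (hharm.continuousOn.mono Metric.sphere_subset_closedBall).circleIntegrable'
  have hnn : ∀ θ : ℝ, 0 ≤ Real.log ‖f (hMob η (circleMap 0 ρ θ))‖ := fun θ =>
    Real.log_nonneg (h1 _ (him _ (by simpa [abs_of_pos hρ0] using hρ)))
  rw [Real.circleAverage_def, intervalIntegral.integral_of_le Real.two_pi_pos.le, smul_eq_mul,
    inv_mul_eq_iff_eq_mul₀ Real.two_pi_pos.ne'] at h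
  have h0 : hMob η 0 = Complex.I * η := by simp [hMob]
  rw [h0] at h
  rw [← h, restrict_Ioo_eq_restrict_Ioc, ofReal_integral_eq_lintegral_ofReal]
  · have := hint
    unfold CircleIntegrable at this
    rwa [intervalIntegrable_iff_integrableOn_Ioc_of_le Real.two_pi_pos.le] at this
  · exact Filter.Eventually.of_forall hnn

noncomputable def hTheta (η t : ℝ) : ℝ := Real.pi + 2 * Real.arctan (t / η)

theorem hTheta_deriv {η : ℝ} (hη : 0 < η) (t : ℝ) :
    HasDerivAt (hTheta η) (2 * η / (t ^ 2 + η ^ 2)) t := by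
  unfold hTheta
  have := ((((hasDerivAt_id t).div_const η).arctan).const_mul 2).const_add Real.pi
  refine this.congr_deriv ?_
  simp only [id]
  have : t ^ 2 + η ^ 2 ≠ 0 := by positivity
  field_simp
  ring

theorem hTheta_image {η : ℝ} (hη : 0 < η) :
    hTheta η '' Set.univ = Set.Ioo 0 (2 * Real.pi) := by
  ext θ
  simp only [Set.image_univ, Set.mem_range, Set.mem_Ioo, hTheta]
  constructor
  · rintro ⟨t, rfl⟩
    have := Real.arctan_lt_pi_div_two (t / η)
    have := Real.neg_pi_div_two_lt_arctan (t / η)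
    constructor <;> linarith
  · rintro ⟨h1, h2⟩
    refine ⟨η * Real.tan ((θ - Real.pi) / 2), ?_⟩
    rw [mul_div_cancel_left₀ _ hη.ne', Real.arctan_tan (by linarith) (by linarith)]
    ring

theorem hTheta_inj {η : ℝ} (hη : 0 < η) : Function.Injective (hTheta η) := by
  intro a b h
  unfold hTheta at h
  have : Real.arctan (a / η) = Real.arctan (b / η) := by linarith
  have := Real.arctan_injective this
  field_simp at this
  exact this

theorem hTheta_circle {η : ℝ} (hη : 0 < η) (t : ℝ) :
    circleMap 0 1 (hTheta η t) ≠ 1 ∧ hMob η (circleMap 0 1 (hTheta η t)) = t := by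
  set τ := t / η with hτ
  have ht : t = η * τ := by rw [hτ]; field_simp
  set r := Real.sqrt (1 + τ ^ 2) with hr
  have hr2 : (r : ℂ) ^ 2 = 1 + (τ : ℂ) ^ 2 := by
    have : r ^ 2 = 1 + τ ^ 2 := Real.sq_sqrt (by positivity)
    exact_mod_cast this
  have hr0 : (r : ℂ) ≠ 0 := by
    have : r ≠ 0 := by positivity
    exact_mod_cast this
  have hexp : Complex.exp (Real.arctan τ * Complex.I) = (1 + τ * Complex.I) / r := by
    rw [Complex.exp_mul_I, ← Complex.ofReal_cos, ← Complex.ofReal_sin, Real.cos_arctan,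
      Real.sin_arctan, ← hr]
    push_cast
    field_simp
  have hfac : (1 + (τ : ℂ) ^ 2) = (1 + τ * Complex.I) * (1 - τ * Complex.I) := by
    ring_nf; simp
  have hne : (1 - τ * Complex.I) ≠ 0 := by
    intro h
    have := congrArg Complex.re h
    simp at this
  have hne' : (1 + τ * Complex.I) ≠ 0 := by
    intro h
    have := congrArg Complex.re h
    simp at this
  have hw : circleMap 0 1 (hTheta η t) = -((1 + τ * Complex.I) / (1 - τ * Complex.I)) := by
    have e1 : ((Real.pi + 2 * Real.arctan τ : ℝ) : ℂ) * Complex.I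
      = Real.pi * Complex.I + (Real.arctan τ * Complex.I + Real.arctan τ * Complex.I) := by
      push_cast; ring
    rw [circleMap, hTheta, ← hτ, e1, Complex.exp_add, Complex.exp_add, hexp, Complex.exp_pi_mul_I]
    rw [div_mul_div_comm, ← pow_two (r : ℂ), hr2, hfac]
    field_simp
    simp
  have h1w : 1 - circleMap 0 1 (hTheta η t) = 2 / (1 - τ * Complex.I) := by
    rw [hw]; field_simp; ring
  have h1w' : 1 + circleMap 0 1 (hTheta η t) = -2 * τ * Complex.I / (1 - τ * Complex.I) := by
    rw [hw]; field_simp; ring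
  refine ⟨?_, ?_⟩
  · intro h
    rw [h, sub_self] at h1w
    have : (2 : ℂ) / (1 - τ * Complex.I) ≠ 0 := div_ne_zero two_ne_zero hne
    exact this h1w.symm
  · unfold hMob
    rw [h1w, h1w', ht]
    push_cast
    rw [div_eq_iff (div_ne_zero two_ne_zero hne), mul_div_assoc', mul_div_assoc']
    congr 1
    linear_combination (-2 * (η : ℂ) * τ) * Complex.I_sq

theorem hPoisson {f : ℂ → ℂ} (hf : Differentiable ℂ f)
    (h1 : ∀ z : ℂ, 0 ≤ z.im → 1 ≤ ‖f z‖) {η : ℝ} (hη : 0 < η) :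
    ∫⁻ t : ℝ, ENNReal.ofReal (2 * η / (t ^ 2 + η ^ 2)) * ENNReal.ofReal (Real.log ‖f t‖)
      ≤ ENNReal.ofReal (2 * Real.pi * Real.log ‖f (Complex.I * η)‖) := by
  have hmean : ∀ ρ : ℝ, 0 < ρ → ρ < 1 → ∫⁻ t : ℝ, ENNReal.ofReal (2 * η / (t ^ 2 + η ^ 2)) *
      ENNReal.ofReal (Real.log ‖f (hMob η (circleMap 0 ρ (hTheta η t)))‖)
      = ENNReal.ofReal (2 * Real.pi * Real.log ‖f (Complex.I * η)‖) := by
    intro ρ h0 hρ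
    rw [← hMob_mean hf h1 hη h0 hρ, ← hTheta_image hη,
      lintegral_image_eq_lintegral_abs_deriv_mul MeasurableSet.univ
        (fun t _ => (hTheta_deriv hη t).hasDerivWithinAt) (hTheta_inj hη).injOn, setLIntegral_univ]
    congr 1; ext t
    rw [abs_of_nonneg (by positivity)]
  set ρ : ℕ → ℝ := fun n => 1 - 1 / ((n : ℝ) + 2) with hρ
  have hρ0 : ∀ n, 0 < ρ n := by
    intro n
    have : (1 : ℝ) / ((n : ℝ) + 2) < 1 := by
      rw [div_lt_one (by positivity)]
      have : (0 : ℝ) ≤ n := by positivity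
      linarith
    simp only [hρ]; linarith
  have hρ1 : ∀ n, ρ n < 1 := by
    intro n
    have : (0 : ℝ) < 1 / ((n : ℝ) + 2) := by positivity
    simp only [hρ]; linarith
  have hρt : Filter.Tendsto ρ Filter.atTop (nhds 1) := by
    have h := (tendsto_const_nhds (x := (1:ℝ))).div_atTop
      (Filter.tendsto_atTop_add_const_right _ (2:ℝ) tendsto_natCast_atTop_atTop)
    have := (tendsto_const_nhds (x := (1:ℝ))).sub h
    simpa [hρ] using this
  have hlim : ∀ t : ℝ, Filter.Tendsto (fun n => ENNReal.ofReal (2 * η / (t ^ 2 + η ^ 2)) *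
      ENNReal.ofReal (Real.log ‖f (hMob η (circleMap 0 (ρ n) (hTheta η t)))‖)) Filter.atTop
      (nhds (ENNReal.ofReal (2 * η / (t ^ 2 + η ^ 2)) * ENNReal.ofReal (Real.log ‖f t‖))) := by
    intro t
    refine ENNReal.Tendsto.const_mul (ENNReal.tendsto_ofReal ?_) (Or.inr ENNReal.ofReal_ne_top)
    have hne : f t ≠ 0 := by
      intro h0
      have := h1 t (by simp)
      rw [h0, norm_zero] at this
      linarith
    refine Filter.Tendsto.log ?_ (norm_ne_zero_iff.2 hne)
    refine Filter.Tendsto.norm ?_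
    have hcw : Filter.Tendsto (fun n => circleMap 0 (ρ n) (hTheta η t)) Filter.atTop
        (nhds (circleMap 0 1 (hTheta η t))) := by
      have hc : Continuous (fun r : ℝ => circleMap 0 r (hTheta η t)) := by
        unfold circleMap; fun_prop
      exact (hc.tendsto 1).comp hρt
    obtain ⟨hc1, hc2⟩ := hTheta_circle hη t
    have hM : ContinuousAt (hMob η) (circleMap 0 1 (hTheta η t)) := by
      unfold hMob
      have : 1 - circleMap 0 1 (hTheta η t) ≠ 0 := sub_ne_zero.2 (Ne.symm hc1)
      fun_prop (disch := assumption)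
    have h2 := (hf.continuous.tendsto _).comp (hM.tendsto.comp hcw)
    rw [hc2] at h2
    exact h2
  have hmeas : ∀ n, Measurable (fun t : ℝ => ENNReal.ofReal (2 * η / (t ^ 2 + η ^ 2)) *
      ENNReal.ofReal (Real.log ‖f (hMob η (circleMap 0 (ρ n) (hTheta η t)))‖)) := by
    intro n
    have m1 : Measurable (hMob η) := by unfold hMob; fun_prop
    have m2 : Measurable (hTheta η) := by unfold hTheta; fun_prop
    have m3 : Measurable (circleMap 0 (ρ n)) := (continuous_circleMap 0 (ρ n)).measurable
    have m4 : Measurable f := hf.continuous.measurable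
    have m5 := m4.comp (m1.comp (m3.comp m2))
    exact Measurable.mul (by fun_prop) (Real.measurable_log.comp m5.norm).ennreal_ofReal
  have hfatou := lintegral_liminf_le (μ := volume) (u := Filter.atTop) hmeas
  simp_rw [fun t => (hlim t).liminf_eq, fun n => hmean (ρ n) (hρ0 n) (hρ1 n)] at hfatou
  simpa using hfatou

theorem hPoisson_limit {f : ℂ → ℂ} (hf : Differentiable ℂ f)
    (h1 : ∀ z : ℂ, 0 ≤ z.im → 1 ≤ ‖f z‖) {N : ℝ}
    (hN : ∀ η : ℝ, 0 < η → ‖f (Complex.I * η)‖ ^ 2 ≤ Real.exp (N / η)) :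
    ∫ t : ℝ, Real.log (‖f t‖ ^ 2) ≤ Real.pi * N := by
  have hlog0 : ∀ t : ℝ, 0 ≤ Real.log ‖f t‖ := fun t => Real.log_nonneg (h1 t (by simp))
  have hm : Measurable (fun t : ℝ => Real.log ‖f t‖) :=
    Real.measurable_log.comp (hf.continuous.comp Complex.continuous_ofReal).measurable.norm
  have hb : ∀ n : ℕ, ∫⁻ t : ℝ, ENNReal.ofReal (((n:ℝ)+1) ^ 2 / (t ^ 2 + ((n:ℝ)+1) ^ 2) *
      Real.log (‖f t‖ ^ 2)) ≤ ENNReal.ofReal (Real.pi * N) := by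
    intro n
    have hη : (0:ℝ) < (n:ℝ) + 1 := by positivity
    set η := (n:ℝ) + 1
    have h := hPoisson hf h1 hη
    calc _ = ENNReal.ofReal η * ∫⁻ t : ℝ, ENNReal.ofReal (2 * η / (t ^ 2 + η ^ 2)) *
          ENNReal.ofReal (Real.log ‖f t‖) := by
          rw [← lintegral_const_mul _ (by fun_prop)]
          congr 1; ext t
          rw [← ENNReal.ofReal_mul (by positivity), ← ENNReal.ofReal_mul hη.le, Real.log_pow]
          congr 1
          push_cast
          ring
      _ ≤ ENNReal.ofReal η * ENNReal.ofReal (2 * Real.pi * Real.log ‖f (Complex.I * η)‖) := by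
          gcongr
      _ ≤ _ := by
          rw [← ENNReal.ofReal_mul hη.le]
          apply ENNReal.ofReal_le_ofReal
          have hpos : 0 < ‖f (Complex.I * η)‖ :=
            lt_of_lt_of_le one_pos (h1 _ (by simp [hη.le]))
          have h2 := Real.log_le_log (by positivity) (hN η hη)
          rw [Real.log_exp, Real.log_pow, le_div_iff₀ hη] at h2
          push_cast at h2
          nlinarith [Real.pi_pos]
  have hlim : ∀ t : ℝ, Filter.Tendsto (fun n : ℕ => ENNReal.ofReal
      (((n:ℝ)+1) ^ 2 / (t ^ 2 + ((n:ℝ)+1) ^ 2) * Real.log (‖f t‖ ^ 2))) Filter.atTop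
      (nhds (ENNReal.ofReal (Real.log (‖f t‖ ^ 2)))) := by
    intro t
    refine ENNReal.tendsto_ofReal ?_
    have h0 : Filter.Tendsto (fun n : ℕ => (t / ((n:ℝ)+1)) ^ 2) Filter.atTop (nhds (0 ^ 2)) :=
      ((tendsto_const_nhds (x := t)).div_atTop
        (Filter.tendsto_atTop_add_const_right _ (1:ℝ) tendsto_natCast_atTop_atTop)).pow 2
    have h2 := (((h0.add_const 1).inv₀ (by norm_num)).mul_const (Real.log (‖f t‖ ^ 2)))
    simp only [ne_eq, OfNat.ofNat_ne_zero, not_false_eq_true, zero_pow, zero_add, inv_one,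
      one_mul] at h2
    refine h2.congr fun n => ?_
    congr 1
    have : (n:ℝ) + 1 ≠ 0 := by positivity
    have : t ^ 2 + ((n:ℝ)+1) ^ 2 ≠ 0 := by positivity
    field_simp
  have hm2 : Measurable (fun t : ℝ => Real.log (‖f t‖ ^ 2)) :=
    Real.measurable_log.comp
      ((hf.continuous.comp Complex.continuous_ofReal).measurable.norm.pow_const 2)
  have hfatou := lintegral_liminf_le (μ := volume) (u := Filter.atTop) (f := fun (n : ℕ) (t : ℝ) => ENNReal.ofReal
      (((n:ℝ)+1) ^ 2 / (t ^ 2 + ((n:ℝ)+1) ^ 2) * Real.log (‖f t‖ ^ 2)))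
      (fun n => Measurable.ennreal_ofReal (by fun_prop))
  simp_rw [fun t => (hlim t).liminf_eq] at hfatou
  have hfin : ∫⁻ t : ℝ, ENNReal.ofReal (Real.log (‖f t‖ ^ 2)) ≤ ENNReal.ofReal (Real.pi * N) := by
    refine hfatou.trans ?_
    refine (Filter.liminf_le_liminf (Filter.Eventually.of_forall hb)).trans ?_
    simp
  have hnn : ∀ t : ℝ, 0 ≤ Real.log (‖f t‖ ^ 2) := by
    intro t; rw [Real.log_pow]; have := hlog0 t; positivity
  have hN0 : 0 ≤ N := by
    have h2 := hN 1 one_pos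
    have h3 : 1 ≤ ‖f (Complex.I * (1:ℝ))‖ ^ 2 := one_le_pow₀ (h1 _ (by simp))
    have h4 := h3.trans h2
    rw [Real.one_le_exp_iff] at h4
    simpa using h4
  rw [integral_eq_lintegral_of_nonneg_ae (Filter.Eventually.of_forall hnn) hm2.aestronglyMeasurable]
  refine ENNReal.toReal_le_of_le_ofReal (by positivity) hfin


theorem hPP_conj (x0 : ℝ) (β : ℝ → ℝ) (j : ℕ) : ∀ (ω t : ℝ),
    (starRingEnd ℂ) (hPP x0 β j (ω : ℂ) t) = hPP x0 β j (-(ω : ℂ)) t := by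
  induction j with
  | zero => intro ω t; simp [hPP]
  | succ j ih =>
    intro ω t
    show (starRingEnd ℂ) (∫ s in x0..t, (β s : ℂ) * hEE x0 ω s * hPP x0 β j (-(ω : ℂ)) s)
      = ∫ s in x0..t, (β s : ℂ) * hEE x0 (-(ω : ℂ)) s * hPP x0 β j (- -(ω : ℂ)) s
    rw [intervalIntegral.intervalIntegral_eq_integral_uIoc,
      intervalIntegral.intervalIntegral_eq_integral_uIoc, Complex.real_smul, Complex.real_smul,
      map_mul, Complex.conj_ofReal, ← integral_conj]
    congr 1
    refine integral_congr_ae (Filter.Eventually.of_forall fun s => ?_)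
    have h1 := ih (-ω) s
    push_cast at h1
    have h2 : (starRingEnd ℂ) (hEE x0 (ω : ℂ) s) = hEE x0 (-(ω : ℂ)) s := by
      unfold hEE
      rw [← Complex.exp_conj]
      congr 1
      have h2c : (starRingEnd ℂ) 2 = 2 := Complex.conj_ofNat 2
      simp [h2c]
    simp only [map_mul, Complex.conj_ofReal, h1, h2]

theorem hQQ_conj (x0 : ℝ) (β : ℝ → ℝ) (ω t : ℝ) :
    (starRingEnd ℂ) (hQQ x0 β (ω : ℂ) t) = hQQ x0 β (-(ω : ℂ)) t := by
  unfold hQQ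
  rw [Complex.conj_tsum]
  simp_rw [hPP_conj]

theorem Aiter_eq_hPP {x0 y : ℝ} {α β : ℝ → ℝ} (hαβ : ∀ s ∈ Set.Ioc x0 y, β s = α s) (ω : ℝ)
    (j : ℕ) : ∀ t ∈ Set.Icc x0 y, Aiter x0 α (ω : ℂ) j t = hPP x0 β j (ω : ℂ) t := by
  induction j with
  | zero => intro t _; simp [Aiter, hPP]
  | succ j ih =>
    intro t ht
    show (∫ s in x0..t, (α s : ℂ) * Complex.exp (2 * Complex.I * ((s : ℂ) - (x0 : ℂ)) * ω)
          * (starRingEnd ℂ) (Aiter x0 α ω j s))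
      = ∫ s in x0..t, (β s : ℂ) * hEE x0 ω s * hPP x0 β j (-(ω : ℂ)) s
    rw [intervalIntegral.integral_of_le ht.1, intervalIntegral.integral_of_le ht.1]
    refine setIntegral_congr_fun measurableSet_Ioc fun s hs => ?_
    have hs' : s ∈ Set.Ioc x0 y := ⟨hs.1, hs.2.trans ht.2⟩
    simp only [ih s ⟨hs'.1.le, hs'.2⟩, hPP_conj, hαβ s hs', hEE]

theorem harmE_eq_hQQ {x0 y : ℝ} {α β : ℝ → ℝ} (hxy : x0 ≤ y)
    (hαβ : ∀ s ∈ Set.Ioc x0 y, β s = α s) (ω : ℝ) :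
    harmE x0 y α (ω : ℂ) = hQQ x0 β (ω : ℂ) y := by
  unfold harmE hQQ
  congr 1
  ext j
  exact Aiter_eq_hPP hαβ ω j y ⟨hxy, le_rfl⟩

noncomputable def hcc (x0 : ℝ) (β : ℝ → ℝ) (ω : ℂ) (t : ℝ) : ℂ :=
  (hQQ x0 β ω t + hQQ x0 (fun s => -β s) ω t) / 2

noncomputable def hdd (x0 : ℝ) (β : ℝ → ℝ) (ω : ℂ) (t : ℝ) : ℂ :=
  (hQQ x0 β (-ω) t - hQQ x0 (fun s => -β s) (-ω) t) / 2

section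
variable {x0 y : ℝ} {β : ℝ → ℝ}

theorem hcd_system (hβ : Integrable β) (hs : ∀ s, s ∉ Set.Ioc x0 y → β s = 0) (ω : ℂ) :
    Integrable (fun s => (β s : ℂ) * hEE x0 ω s * hdd x0 β ω s) ∧
    Integrable (fun s => (β s : ℂ) * hEE x0 (-ω) s * hcc x0 β ω s) ∧
    (∀ t, hcc x0 β ω t = 1 + ∫ s in x0..t, (β s : ℂ) * hEE x0 ω s * hdd x0 β ω s) ∧
    (∀ t, hdd x0 β ω t = 0 + ∫ s in x0..t, (β s : ℂ) * hEE x0 (-ω) s * hcc x0 β ω s) := by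
  have hβn : Integrable (fun s => -β s) := hβ.neg
  have hsn : ∀ s, s ∉ Set.Ioc x0 y → -β s = 0 := fun s h => by rw [hs s h, neg_zero]
  have key : ∀ ω ω' : ℂ, Integrable (fun s => (β s : ℂ) * hEE x0 ω s * hQQ x0 β ω' s) := by
    intro ω ω'
    obtain ⟨M, hM⟩ := hQQ_bdd hβ hs ω'
    exact hker_mul_int hβ hs ω (hQQ_cont hβ hs ω') hM
  have keyn : ∀ ω ω' : ℂ,
      Integrable (fun s => (β s : ℂ) * hEE x0 ω s * hQQ x0 (fun s => -β s) ω' s) := by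
    intro ω ω'
    obtain ⟨M, hM⟩ := hQQ_bdd hβn hsn ω'
    exact hker_mul_int hβ hs ω (hQQ_cont hβn hsn ω') hM
  have e1 : (fun s => (β s : ℂ) * hEE x0 ω s * hdd x0 β ω s) = fun s =>
      ((β s : ℂ) * hEE x0 ω s * hQQ x0 β (-ω) s
        - (β s : ℂ) * hEE x0 ω s * hQQ x0 (fun s => -β s) (-ω) s) / 2 := by
    ext s; unfold hdd; ring
  have e2 : (fun s => (β s : ℂ) * hEE x0 (-ω) s * hcc x0 β ω s) = fun s =>
      ((β s : ℂ) * hEE x0 (-ω) s * hQQ x0 β ω s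
        + (β s : ℂ) * hEE x0 (-ω) s * hQQ x0 (fun s => -β s) ω s) / 2 := by
    ext s; unfold hcc; ring
  have hn : ∀ (ω : ℂ) (t : ℝ), hQQ x0 (fun s => -β s) ω t
      = 1 - ∫ s in x0..t, (β s : ℂ) * hEE x0 ω s * hQQ x0 (fun s => -β s) (-ω) s := by
    intro ω t
    rw [hQQ_eq hβn hsn ω t, sub_eq_add_neg, ← intervalIntegral.integral_neg]
    congr 2
    ext s
    push_cast
    ring
  refine ⟨?_, ?_, ?_, ?_⟩
  · rw [e1]; exact ((key ω (-ω)).sub (keyn ω (-ω))).div_const 2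
  · rw [e2]; exact ((key (-ω) ω).add (keyn (-ω) ω)).div_const 2
  · intro t
    rw [e1, intervalIntegral.integral_div, intervalIntegral.integral_sub
      (key ω (-ω)).intervalIntegrable (keyn ω (-ω)).intervalIntegrable]
    unfold hcc
    rw [hQQ_eq hβ hs ω t, hn ω t]
    ring
  · intro t
    rw [e2, intervalIntegral.integral_div, intervalIntegral.integral_add
      (key (-ω) ω).intervalIntegrable (keyn (-ω) ω).intervalIntegrable]
    unfold hdd
    rw [hQQ_eq hβ hs (-ω) t, hn (-ω) t, neg_neg]
    ring

theorem hcc_diff (hβ : Integrable β) (hs : ∀ s, s ∉ Set.Ioc x0 y → β s = 0) (t : ℝ) :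
    Differentiable ℂ (fun ω => hcc x0 β ω t) := by
  have hβn : Integrable (fun s => -β s) := hβ.neg
  have hsn : ∀ s, s ∉ Set.Ioc x0 y → -β s = 0 := fun s h => by rw [hs s h, neg_zero]
  unfold hcc
  exact ((hQQ_diff hβ hs t).fun_add (hQQ_diff hβn hsn t)).div_const 2

end

/-- Theorem (thm-hyperbolic)(iv), the nonlinear Bessel inequality:
`∫_ℝ −log(1 − |Th_α^{(x0,y)}(ω)|²) dω ≤ π ∫_{x0}^y |α|²` (with `|Th| < 1` everywhere). -/
theorem hyperbolic_tangent_bessel_inequality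
    (x0 x1 y : ℝ) (hx : x0 < x1) (hy : y ∈ Set.Ioc x0 x1)
    (α : ℝ → ℝ)
    (hα : IntegrableOn α (Set.Ioo x0 x1))
    (hα2 : IntegrableOn (fun x => |α x| ^ 2) (Set.Ioo x0 x1))
    (Th : ℝ → ℂ)
    (hTh : ∀ ω : ℝ,
      Th ω = (harmE x0 y α (ω : ℂ) - harmE x0 y (fun s => -α s) (ω : ℂ))
              / (harmE x0 y α (ω : ℂ) + harmE x0 y (fun s => -α s) (ω : ℂ))) :
    (∀ ω : ℝ, ‖Th ω‖ < 1) ∧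
      (∫ ω : ℝ, -Real.log (1 - ‖Th ω‖ ^ 2)) ≤ Real.pi * ∫ s in x0..y, |α s| ^ 2 := by

  have hxy : x0 ≤ y := hy.1.le
  have hsub : Set.Ioc x0 y ⊆ Set.Ioc x0 x1 := Set.Ioc_subset_Ioc_right hy.2
  set β : ℝ → ℝ := (Set.Ioc x0 y).indicator α with hβdef
  have hαβ : ∀ s ∈ Set.Ioc x0 y, β s = α s := fun s hs => Set.indicator_of_mem hs α
  have hs : ∀ s, s ∉ Set.Ioc x0 y → β s = 0 := fun s hs => Set.indicator_of_notMem hs α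
  have hβ : Integrable β := by
    rw [hβdef, integrable_indicator_iff measurableSet_Ioc]
    exact ((integrableOn_Ioc_iff_integrableOn_Ioo (by simp)).2 hα).mono_set hsub
  have hβ2 : Integrable (fun s => β s ^ 2) := by
    have e : (fun s => β s ^ 2) = (Set.Ioc x0 y).indicator (fun x => |α x| ^ 2) := by
      ext s
      by_cases h : s ∈ Set.Ioc x0 y
      · rw [hαβ s h, Set.indicator_of_mem h, sq_abs]
      · rw [hs s h, Set.indicator_of_notMem h]; norm_num
    rw [e, integrable_indicator_iff measurableSet_Ioc]
    exact ((integrableOn_Ioc_iff_integrableOn_Ioo (by simp)).2 hα2).mono_set hsub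
  have hN : ∫ s in x0..y, |α s| ^ 2 = ∫ s in x0..y, β s ^ 2 := by
    rw [intervalIntegral.integral_of_le hxy, intervalIntegral.integral_of_le hxy]
    refine setIntegral_congr_fun measurableSet_Ioc fun s h => ?_
    simp only [hαβ s h, sq_abs]
  have hge : ∀ z : ℂ, 0 ≤ z.im → 1 ≤ ‖hcc x0 β z y‖ := by
    intro z hz
    obtain ⟨a1, a2, a3, a4⟩ := hcd_system hβ hs z
    have h := (hsys_V hxy a1 a2 a3 a4).1 hz
    have h2 : 0 ≤ hhh x0 z.im y * ‖hdd x0 β z y‖ ^ 2 := by unfold hhh; positivity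
    have h3 : 1 ≤ ‖hcc x0 β z y‖ ^ 2 := by linarith
    nlinarith [norm_nonneg (hcc x0 β z y)]
  have hreal : ∀ ω : ℝ, ‖hcc x0 β ω y‖ ^ 2 = 1 + ‖hdd x0 β ω y‖ ^ 2 := by
    intro ω
    obtain ⟨a1, a2, a3, a4⟩ := hcd_system hβ hs (ω : ℂ)
    have h := hsys_V hxy a1 a2 a3 a4
    have h2 : hhh x0 (ω : ℂ).im y = 1 := by simp [hhh]
    rw [h2, one_mul] at h
    exact le_antisymm (h.2 (by simp)) (h.1 (by simp))
  have hThn : ∀ ω : ℝ, ‖Th ω‖ = ‖hdd x0 β ω y‖ / ‖hcc x0 β ω y‖ := by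
    intro ω
    have b1 := harmE_eq_hQQ hxy hαβ ω
    have b2 : harmE x0 y (fun s => -α s) (ω : ℂ) = hQQ x0 (fun s => -β s) (ω : ℂ) y :=
      harmE_eq_hQQ hxy (fun s h => by simp only [hαβ s h]) ω
    have hd : hdd x0 β ω y = (starRingEnd ℂ)
        ((hQQ x0 β (ω : ℂ) y - hQQ x0 (fun s => -β s) (ω : ℂ) y) / 2) := by
      have h2c : (starRingEnd ℂ) 2 = 2 := Complex.conj_ofNat 2
      rw [hdd, ← hQQ_conj, ← hQQ_conj]
      simp [h2c]
    rw [hTh, b1, b2, hd, Complex.norm_conj, hcc, ← norm_div,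
      div_div_div_cancel_right₀ two_ne_zero]
  have hpos : ∀ ω : ℝ, 0 < ‖hcc x0 β ω y‖ := fun ω => lt_of_lt_of_le one_pos (hge ω (by simp))
  refine ⟨?_, ?_⟩
  · intro ω
    rw [hThn, div_lt_one (hpos ω)]
    have := hreal ω
    exact lt_of_pow_lt_pow_left₀ 2 (norm_nonneg _) (by linarith)
  · have hint : ∀ ω : ℝ, -Real.log (1 - ‖Th ω‖ ^ 2) = Real.log (‖hcc x0 β ω y‖ ^ 2) := by
      intro ω
      rw [← Real.log_inv]
      congr 1
      rw [hThn, div_pow]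
      have h1 := hreal ω
      have h2 := hpos ω
      have h3 : 1 - ‖hdd x0 β ω y‖ ^ 2 / ‖hcc x0 β ω y‖ ^ 2 = 1 / ‖hcc x0 β ω y‖ ^ 2 := by
        rw [eq_div_iff (by positivity), sub_mul, div_mul_cancel₀ _ (by positivity)]
        linarith
      rw [h3, one_div, inv_inv]
    simp_rw [hint, hN]
    refine hPoisson_limit (f := fun z => hcc x0 β z y) (hcc_diff hβ hs y) hge ?_
    intro η hη
    obtain ⟨a1, a2, a3, a4⟩ := hcd_system hβ hs (Complex.I * η)
    have him : (Complex.I * (η : ℂ)).im = η := by simp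
    have h := hsys_W hxy (by rw [him]; exact hη) hβ2 a1 a2 a3 a4
    rwa [him] at h
end
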